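/- arXiv:1308.0454 — 2 statements merged into one kernel-verified Lean document; each statement's English description precedes it below -/
import Mathlib

section
/- Let [ξ, ξ'] = {ξ + λe^J : 0 ≤ λ ≤ μ} (with μ > 0) be an ordinary segment of the tropical edge E_K. Then μ is the greatest scalar λ ≥ 0 satisfying: λ ≤ min(λ⁺_i(ξ,J), λ⁻_i(ξ,J)) for all i ∈ B(ξ,J), and λ ≤ λ⁻_i(ξ,J) for all i ∈ Λ(ξ,J) such that λ⁻_i(ξ,J) ≤ λ⁺_i(ξ,J). -/
open scoped Classical

noncomputable section

/-- The tropical semiring `ℝ ∪ {−∞}` with max as addition, + as multiplication. -/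
abbrev TT : Type := WithBot ℝ

/-- Tropical dot product `max_j (a j + x j)`. -/
def tdot {n : ℕ} (a x : Fin n → TT) : TT :=
  Finset.univ.sup fun j => a j + x j

/-- Tropical permanent of a square matrix over `TT`. -/
def tper {q : ℕ} (M : Fin q → Fin q → TT) : TT :=
  Finset.univ.sup fun σ : Equiv.Perm (Fin q) => ∑ i, M i (σ i)

/-- A square tropical matrix is tropically singular. -/
def TropSingular {q : ℕ} (M : Fin q → Fin q → TT) : Prop :=
  tper M = ⊥ ∨ ∃ σ π : Equiv.Perm (Fin q), σ ≠ π ∧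
    (∑ i, M i (σ i)) = tper M ∧ (∑ i, M i (π i)) = tper M

/-- An (unsigned) tropical matrix is tropically generic. -/
def TropGeneric {m n : ℕ} (M : Fin m → Fin n → TT) : Prop :=
  ∀ (q : ℕ) (r : Fin q → Fin m) (c : Fin q → Fin n),
    Function.Injective r → Function.Injective c →
    tper (fun i j => M (r i) (c j)) = ⊥ ∨ ¬ TropSingular (fun i j => M (r i) (c j))

/-- sign of an entry of a signed tropical matrix. -/
def esign (ap an : TT) : ℤ :=
  if ap ≠ ⊥ then 1 else if an ≠ ⊥ then -1 else 0

/-- A signed square tropical matrix (pair of matrices) is tropically sign singular. -/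
def TropSignSingular {q : ℕ} (Mp Mn : Fin q → Fin q → TT) : Prop :=
  tper (fun i j => max (Mp i j) (Mn i j)) = ⊥ ∨
  ∃ σ π : Equiv.Perm (Fin q),
    (∑ i, max (Mp i (σ i)) (Mn i (σ i))) = tper (fun i j => max (Mp i j) (Mn i j)) ∧
    (∑ i, max (Mp i (π i)) (Mn i (π i))) = tper (fun i j => max (Mp i j) (Mn i j)) ∧
    ((Equiv.Perm.sign σ : ℤ) * ∏ i, esign (Mp i (σ i)) (Mn i (σ i)))
      ≠ ((Equiv.Perm.sign π : ℤ) * ∏ i, esign (Mp i (π i)) (Mn i (π i)))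

/-- A signed tropical matrix is tropically sign generic. -/
def TropSignGeneric {m n : ℕ} (Mp Mn : Fin m → Fin n → TT) : Prop :=
  ∀ (q : ℕ) (r : Fin q → Fin m) (c : Fin q → Fin n),
    Function.Injective r → Function.Injective c →
    tper (fun i j => max (Mp (r i) (c j)) (Mn (r i) (c j))) = ⊥ ∨
    ¬ TropSignSingular (fun i j => Mp (r i) (c j)) (fun i j => Mn (r i) (c j))

/-- Tropical polyhedron `P(A,b)` given by a signed matrix/vector. -/
def tropP {m n : ℕ} (Ap An : Fin m → Fin n → TT) (bp bn : Fin m → TT) :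
    Set (Fin n → TT) :=
  {x | ∀ i, max (tdot (An i) x) (bn i) ≤ max (tdot (Ap i) x) (bp i)}


section Tangent

variable {m n : ℕ} (Wp Wn : Fin m → Fin (n + 1) → TT)

/-- Real vector viewed inside `T^{n+1}`. -/
def toT (x : Fin (n + 1) → ℝ) : Fin (n + 1) → TT := fun j => (x j : TT)

/-- Modulus of the signed matrix `W`. -/
def tmod : Fin m → Fin (n + 1) → TT := fun i j => max (Wp i j) (Wn i j)

/-- `i` is a hyperplane node of the tangent graph at `x`. -/
def isHypNode (x : Fin (n + 1) → ℝ) (i : Fin m) : Prop :=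
  tdot (Wp i) (toT x) = tdot (Wn i) (toT x) ∧ ⊥ < tdot (Wp i) (toT x)

/-- There is an edge between hyperplane node `i` and coordinate node `j`
in the tangent graph at `x`. -/
def isTEdge (x : Fin (n + 1) → ℝ) (i : Fin m) (j : Fin (n + 1)) : Prop :=
  isHypNode Wp Wn x i ∧ tmod Wp Wn i j + (x j : TT) = tdot (tmod Wp Wn i) (toT x)

/-- Vertices of the tangent (di)graph: hyperplane nodes on the left,
coordinate nodes on the right. -/
abbrev TGV (m n : ℕ) : Type := Sum (Fin m) (Fin (n + 1))

/-- The (undirected) tangent graph at `x`. -/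
def tangentGraph (x : Fin (n + 1) → ℝ) : SimpleGraph (TGV m n) :=
  SimpleGraph.fromRel fun u v =>
    match u, v with
    | Sum.inl i, Sum.inr j => isTEdge Wp Wn x i j
    | _, _ => False

/-- The arc relation of the tangent digraph at `x`: the edge between `i` and
`j` is directed from `j` to `i` when `W_{ij}` is tropically positive, and from
`i` to `j` when it is tropically negative. -/
def arcRel (x : Fin (n + 1) → ℝ) : TGV m n → TGV m n → Prop := fun u v =>
  match u, v with
  | Sum.inr j, Sum.inl i => isTEdge Wp Wn x i j ∧ Wp i j ≠ ⊥
  | Sum.inl i, Sum.inr j => isTEdge Wp Wn x i j ∧ Wn i j ≠ ⊥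
  | _, _ => False

end Tangent

section Pivot

variable {m n : ℕ}

/-- The tropical cone `C = {x : Wᵢ⁺⊙x ≥ Wᵢ⁻⊙x for all i}`. -/
def coneC (Wp Wn : Fin m → Fin (n + 1) → TT) : Set (Fin (n + 1) → TT) :=
  {x | ∀ i, tdot (Wn i) x ≤ tdot (Wp i) x}

/-- The `i`-th s-hyperplane `Hᵢ`. -/
def hypHS (Wp Wn : Fin m → Fin (n + 1) → TT) (i : Fin m) : Set (Fin (n + 1) → TT) :=
  {x | tdot (Wp i) x = tdot (Wn i) x}

/-- The `i`-th half-space `Hᵢ^≥`. -/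
def halfHS (Wp Wn : Fin m → Fin (n + 1) → TT) (i : Fin m) : Set (Fin (n + 1) → TT) :=
  {x | tdot (Wn i) x ≤ tdot (Wp i) x}

/-- The tropical edge `E_K = ⋂_{i ∈ K} Hᵢ ∩ C` (as a set). -/
def edgeEK (Wp Wn : Fin m → Fin (n + 1) → TT) (K : Finset (Fin m)) :
    Set (Fin (n + 1) → TT) :=
  {x | (∀ i ∈ K, x ∈ hypHS Wp Wn i) ∧ x ∈ coneC Wp Wn}

/-- Indicator vector `e^J` of `J ⊆ [n+1]`. -/
def eJ (J : Finset (Fin (n + 1))) : Fin (n + 1) → ℝ := fun j => if j ∈ J then 1 else 0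

/-- `e^J` (with `∅ ⊊ J ⊊ [n+1]`) is a feasible direction from `x` in `D`. -/
def Feasible (D : Set (Fin (n + 1) → TT)) (x : Fin (n + 1) → ℝ)
    (J : Finset (Fin (n + 1))) : Prop :=
  J ≠ ∅ ∧ J ≠ Finset.univ ∧
    ∃ μ : ℝ, 0 < μ ∧ ∀ lam : ℝ, 0 ≤ lam → lam ≤ μ → toT (x + lam • eJ J) ∈ D

/-- `{ξ + λ e^J : 0 ≤ λ ≤ μ}` is an ordinary segment of the tropical edge
`E_K`: it is contained in `E_K` and is maximal in the direction `e^J`. -/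
def IsOrdSeg (Wp Wn : Fin m → Fin (n + 1) → TT) (K : Finset (Fin m))
    (ξ : Fin (n + 1) → ℝ) (J : Finset (Fin (n + 1))) (μ : ℝ) : Prop :=
  0 < μ ∧ J ≠ ∅ ∧ J ≠ Finset.univ ∧
  (∀ lam : ℝ, 0 ≤ lam → lam ≤ μ → toT (ξ + lam • eJ J) ∈ edgeEK Wp Wn K) ∧
  (∀ ε : ℝ, 0 < ε → toT (ξ - ε • eJ J) ∉ edgeEK Wp Wn K) ∧
  (∀ ε : ℝ, 0 < ε → toT (ξ + (μ + ε) • eJ J) ∉ edgeEK Wp Wn K)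

/-- `x` is a breakpoint of `E_K`: an intermediate endpoint shared by two
consecutive ordinary segments. -/
def IsBreakpoint (Wp Wn : Fin m → Fin (n + 1) → TT) (K : Finset (Fin m))
    (x : Fin (n + 1) → ℝ) : Prop :=
  ∃ ξ J μ, IsOrdSeg Wp Wn K ξ J μ ∧ x = ξ + μ • eJ J ∧
    ∃ J' μ', IsOrdSeg Wp Wn K x J' μ' ∧ J ⊂ J'

/-- `x` lies in the relative interior of an ordinary segment of `E_K`. -/
def InRelIntSeg (Wp Wn : Fin m → Fin (n + 1) → TT) (K : Finset (Fin m))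
    (x : Fin (n + 1) → ℝ) : Prop :=
  ∃ ξ J μ, IsOrdSeg Wp Wn K ξ J μ ∧ ∃ lam : ℝ, 0 < lam ∧ lam < μ ∧ x = ξ + lam • eJ J

/-- Embedding of `TT = ℝ ∪ {−∞}` into `EReal`. -/
def tE : TT → EReal := WithBot.recBotCoe ⊥ (fun r => (r : EReal))

/-- `λ⁺_i(ξ,J) = (Wᵢ⁺⊙ξ) − max_{j∈J}(W⁺_{ij} + ξ_j)`, with `−(−∞) = +∞`. -/
def lamP (Wp : Fin m → Fin (n + 1) → TT) (i : Fin m) (ξ : Fin (n + 1) → ℝ)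
    (J : Finset (Fin (n + 1))) : EReal :=
  tE (tdot (Wp i) (toT ξ)) - tE (J.sup fun j => Wp i j + (ξ j : TT))

/-- `λ⁻_i(ξ,J) = (Wᵢ⁺⊙ξ) − max_{j∈J}(W⁻_{ij} + ξ_j)`, with `−(−∞) = +∞`. -/
def lamM (Wp Wn : Fin m → Fin (n + 1) → TT) (i : Fin m) (ξ : Fin (n + 1) → ℝ)
    (J : Finset (Fin (n + 1))) : EReal :=
  tE (tdot (Wp i) (toT ξ)) - tE (J.sup fun j => Wn i j + (ξ j : TT))

/-- `argmax(Wᵢ⁺⊙ξ)`. -/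
def argmaxP (Wp : Fin m → Fin (n + 1) → TT) (i : Fin m) (ξ : Fin (n + 1) → ℝ) :
    Set (Fin (n + 1)) :=
  {j | Wp i j + (ξ j : TT) = tdot (Wp i) (toT ξ)}

/-- `argmax(Wᵢ⁻⊙ξ)`. -/
def argmaxM (Wn : Fin m → Fin (n + 1) → TT) (i : Fin m) (ξ : Fin (n + 1) → ℝ) :
    Set (Fin (n + 1)) :=
  {j | Wn i j + (ξ j : TT) = tdot (Wn i) (toT ξ)}

/-- `Λ(ξ,J)`: candidate entering constraints. -/
def entSet (Wp : Fin m → Fin (n + 1) → TT) (K : Finset (Fin m))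
    (ξ : Fin (n + 1) → ℝ) (J : Finset (Fin (n + 1))) : Set (Fin m) :=
  {i | i ∉ K ∧ ∀ j ∈ J, j ∉ argmaxP Wp i ξ}

/-- `B(ξ,J)`: candidate breakpoint constraints. -/
def brkSet (Wp Wn : Fin m → Fin (n + 1) → TT) (K : Finset (Fin m))
    (ξ : Fin (n + 1) → ℝ) (J : Finset (Fin (n + 1))) : Set (Fin m) :=
  {i | i ∈ K ∧ (∀ j ∈ J, j ∉ argmaxP Wp i ξ) ∧ ∀ j ∈ J, j ∉ argmaxM Wn i ξ}

/-- Coordinate nodes with an arc into hyperplane node `i`. -/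
def degIn (Wp Wn : Fin m → Fin (n + 1) → TT) (x : Fin (n + 1) → ℝ) (i : Fin m) :
    Set (Fin (n + 1)) :=
  {j | arcRel Wp Wn x (Sum.inr j) (Sum.inl i)}

/-- Coordinate nodes with an arc out of hyperplane node `i`. -/
def degOut (Wp Wn : Fin m → Fin (n + 1) → TT) (x : Fin (n + 1) → ℝ) (i : Fin m) :
    Set (Fin (n + 1)) :=
  {j | arcRel Wp Wn x (Sum.inl i) (Sum.inr j)}

/-- Hyperplane node `i` has degree `(1,1)` in the tangent digraph at `x`. -/
def deg11 (Wp Wn : Fin m → Fin (n + 1) → TT) (x : Fin (n + 1) → ℝ) (i : Fin m) : Prop :=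
  (∃! j, j ∈ degIn Wp Wn x i) ∧ (∃! j, j ∈ degOut Wp Wn x i)

/-- Hyperplane node `i` has degree `(2,1)`. -/
def deg21 (Wp Wn : Fin m → Fin (n + 1) → TT) (x : Fin (n + 1) → ℝ) (i : Fin m) : Prop :=
  (degIn Wp Wn x i).ncard = 2 ∧ (∃! j, j ∈ degOut Wp Wn x i)

/-- Hyperplane node `i` has degree `(1,2)`. -/
def deg12 (Wp Wn : Fin m → Fin (n + 1) → TT) (x : Fin (n + 1) → ℝ) (i : Fin m) : Prop :=
  (∃! j, j ∈ degIn Wp Wn x i) ∧ (degOut Wp Wn x i).ncard = 2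

/-- The support of the tangent graph at `x`: all coordinate nodes together
with the hyperplane nodes. -/
def suppV (Wp Wn : Fin m → Fin (n + 1) → TT) (x : Fin (n + 1) → ℝ) : Set (TGV m n) :=
  {v | match v with
       | Sum.inl i => isHypNode Wp Wn x i
       | Sum.inr _ => True}

/-- The underlying undirected edge relation of the tangent graph. -/
def tedgeRel (Wp Wn : Fin m → Fin (n + 1) → TT) (x : Fin (n + 1) → ℝ) :
    TGV m n → TGV m n → Prop := fun u v =>
  match u, v with
  | Sum.inl i, Sum.inr j => isTEdge Wp Wn x i j
  | _, _ => False

/-- The tangent graph with the hyperplane node `ℓ` (and its incident edges)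
deleted. -/
def delNode (Wp Wn : Fin m → Fin (n + 1) → TT) (x : Fin (n + 1) → ℝ) (ℓ : Fin m) :
    SimpleGraph (TGV m n) :=
  SimpleGraph.fromRel fun u v =>
    tedgeRel Wp Wn x u v ∧ u ≠ Sum.inl ℓ ∧ v ≠ Sum.inl ℓ

/-- The tangent graph with the edge between hyperplane node `k` and coordinate
node `j` deleted. -/
def delEdge (Wp Wn : Fin m → Fin (n + 1) → TT) (x : Fin (n + 1) → ℝ) (k : Fin m)
    (j : Fin (n + 1)) : SimpleGraph (TGV m n) :=
  SimpleGraph.fromRel fun u v =>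
    tedgeRel Wp Wn x u v ∧ ¬(u = Sum.inl k ∧ v = Sum.inr j)

/-- Coordinate nodes weakly connected to hyperplane node `k` after deleting the
edge between `k` and `j`. -/
def reachJ (Wp Wn : Fin m → Fin (n + 1) → TT) (x : Fin (n + 1) → ℝ) (k : Fin m)
    (j : Fin (n + 1)) : Finset (Fin (n + 1)) :=
  Finset.univ.filter fun l => (delEdge Wp Wn x k j).Reachable (Sum.inl k) (Sum.inr l)

end Pivot

/-!
In the tangent graph at `x`, the edges at a row `i` are the columns attaining the maximum of row
`i` of `|W| ⊙ x`. A nonempty family of such edges with at least as many edges as vertices contains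
two disjoint perfect matchings of the same rows to the same columns, hence two optimal permutations
of a square submatrix; tropical genericity excludes this. Since every row on which the two sides
agree has degree at least two, counting edges at a point of `E_K` leaves room for at most degree
three at a row of `K`, and degree two at any other such row.

Along `ξ + λ e^J` each side of a row is `max c (s + λ)`, where `c` and `s` are its maxima over `Jᶜ`
and `J`. If one of the bounds on `λ` failed before `μ`, then at the point where `s + λ` overtakes
`c` the row would exceed its allowed degree. Conversely, as long as `λ` respects all bounds, every
equality and inequality defining `E_K` persists, so by maximality of the segment `λ ≤ μ`.
-/

section Bipartite

open Finset

variable {α β γ : Type*}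

theorem two_le_card_fiber_of_card_image_le_erase [DecidableEq α] [DecidableEq γ] {f : γ → α}
    {F : Finset γ} (h : ∀ e ∈ F, #(F.image f) ≤ #((F.erase e).image f)) :
    ∀ i ∈ F.image f, 2 ≤ #{e ∈ F | f e = i} := by
  refine forall_mem_image.mpr fun e he => ?_
  have himage : (F.erase e).image f = F.image f :=
    eq_of_subset_of_card_le (image_subset_image (erase_subset e F)) (h e he)
  obtain ⟨e', he', hfe⟩ := mem_image.mp (himage ▸ mem_image_of_mem f he)
  obtain ⟨hne, he'F⟩ := mem_erase.mp he'
  exact one_lt_card.mpr ⟨e', by simp [he'F, hfe], e, by simp [he], hne⟩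

theorem card_fiber_eq_two_of_card_le [DecidableEq α] {f : γ → α} {F : Finset γ}
    (htwo : ∀ i ∈ F.image f, 2 ≤ #{e ∈ F | f e = i}) (hcard : #F ≤ 2 * #(F.image f)) :
    ∀ i ∈ F.image f, #{e ∈ F | f e = i} = 2 := by
  have hsum : ∑ i ∈ F.image f, 2 = ∑ i ∈ F.image f, #{e ∈ F | f e = i} := by
    refine (sum_le_sum htwo).antisymm ?_
    rwa [← card_eq_sum_card_image, sum_const, smul_eq_mul, mul_comm]
  exact fun i hi => ((sum_eq_sum_iff_of_le htwo).mp hsum i hi).symm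

/- Deleting an edge from a minimal such subgraph must keep all its vertices, so every degree is at
least two, and counting edges by either side forces equality. -/
theorem exists_subset_card_fiber_eq_two [DecidableEq α] [DecidableEq β] (p : γ → α) (q : γ → β)
    {E : Finset γ} (hE : E.Nonempty) (hcard : #(E.image p) + #(E.image q) ≤ #E) :
    ∃ F ⊆ E, F.Nonempty ∧ (∀ i ∈ F.image p, #{e ∈ F | p e = i} = 2) ∧
      ∀ j ∈ F.image q, #{e ∈ F | q e = j} = 2 := by
  classical
  obtain ⟨F, hFE, hmin⟩ := exists_minimal_le_of_wellFoundedLT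
    (fun F : Finset γ => F.Nonempty ∧ #(F.image p) + #(F.image q) ≤ #F) E ⟨hE, hcard⟩
  obtain ⟨hF, hFcard⟩ := hmin.prop
  have hp : 0 < #(F.image p) := card_pos.mpr (hF.image p)
  have hq : 0 < #(F.image q) := card_pos.mpr (hF.image q)
  have hp_erase (e : γ) : #((F.erase e).image p) ≤ #(F.image p) :=
    card_le_card (image_subset_image (erase_subset e F))
  have hq_erase (e : γ) : #((F.erase e).image q) ≤ #(F.image q) :=
    card_le_card (image_subset_image (erase_subset e F))
  have hcard_le_erase : ∀ e ∈ F, #F ≤ #((F.erase e).image p) + #((F.erase e).image q) := by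
    intro e he
    by_contra! hlt
    have hcard_erase := card_erase_of_mem he
    exact hmin.not_prop_of_lt (erase_ssubset he) ⟨card_pos.mp (by omega), by omega⟩
  have htwo_p := two_le_card_fiber_of_card_image_le_erase (f := p) fun e he => by
    linarith [hcard_le_erase e he, hq_erase e]
  have htwo_q := two_le_card_fiber_of_card_image_le_erase (f := q) fun e he => by
    linarith [hcard_le_erase e he, hp_erase e]
  obtain ⟨e, he⟩ := hF
  have hcard_le : #F ≤ #(F.image p) + #(F.image q) :=
    (hcard_le_erase e he).trans (add_le_add (hp_erase e) (hq_erase e))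
  have hp_le := mul_card_image_le_card F 2 htwo_p
  have hq_le := mul_card_image_le_card F 2 htwo_q
  exact ⟨F, hFE, ⟨e, he⟩, card_fiber_eq_two_of_card_le htwo_p (by omega),
    card_fiber_eq_two_of_card_le htwo_q (by omega)⟩

theorem exists_equiv_of_regular [Fintype α] [Fintype β] (r : α → β → Prop) [DecidableRel r]
    {d : ℕ} (hd : 0 < d) (hrow : ∀ i, #{j | r i j} = d) (hcol : ∀ j, #{i | r i j} = d) :
    ∃ f : α ≃ β, ∀ i, r i (f i) := by
  have hall (A : Finset α) : #A ≤ #{j | ∃ i ∈ A, r i j} := by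
    refine Nat.le_of_mul_le_mul_right (card_mul_le_card_mul r (m := d) (n := d) ?_ ?_) hd
    · intro i hi
      rw [← hrow i]
      exact card_le_card fun j hj => by
        simp only [mem_filter_univ, mem_bipartiteAbove] at hj ⊢
        exact ⟨⟨i, hi, hj⟩, hj⟩
    · intro j _
      rw [← hcol j]
      exact card_le_card (filter_subset_filter _ (subset_univ A))
  obtain ⟨f, hf, hrf⟩ := (Fintype.all_card_le_filter_rel_iff_exists_injective r).mp hall
  have hcard : Fintype.card α = Fintype.card β :=
    Nat.eq_of_mul_eq_mul_right hd <| card_mul_eq_card_mul r (s := univ) (t := univ)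
      (fun i _ => hrow i) (fun j _ => hcol j)
  exact ⟨Equiv.ofBijective f ((Fintype.bijective_iff_injective_and_card f).mpr ⟨hf, hcard⟩), hrf⟩

theorem exists_disjoint_equivs_of_two_regular [Fintype α] [Fintype β] (r : α → β → Prop)
    [DecidableRel r] (hrow : ∀ i, #{j | r i j} = 2) (hcol : ∀ j, #{i | r i j} = 2) :
    ∃ f g : α ≃ β, ∀ i, r i (f i) ∧ r i (g i) ∧ f i ≠ g i := by
  classical
  obtain ⟨f, hf⟩ := exists_equiv_of_regular r two_pos hrow hcol
  have hrow' (i : α) : #{j | r i j ∧ j ≠ f i} = 1 := by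
    have herase : ({j | r i j ∧ j ≠ f i} : Finset β) = ({j | r i j} : Finset β).erase (f i) := by
      grind
    rw [herase, card_erase_of_mem (by simp [hf]), hrow]
  have hcol' (j : β) : #{i | r i j ∧ j ≠ f i} = 1 := by
    have herase : ({i | r i j ∧ j ≠ f i} : Finset α) =
        ({i | r i j} : Finset α).erase (f.symm j) := by
      grind
    rw [herase, card_erase_of_mem (by simpa using hf (f.symm j)), hcol]
  obtain ⟨g, hg⟩ := exists_equiv_of_regular (fun i j => r i j ∧ j ≠ f i) one_pos hrow' hcol'
  exact ⟨f, g, fun i => ⟨hf i, (hg i).1, (hg i).2.symm⟩⟩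

theorem exists_disjoint_matchings_of_card_le [DecidableEq α] [DecidableEq β]
    {E : Finset (α × β)} (hE : E.Nonempty)
    (hcard : #(E.image Prod.fst) + #(E.image Prod.snd) ≤ #E) :
    ∃ (R : Finset α) (C : Finset β) (f g : R ≃ C), R.Nonempty ∧
      ∀ i : R, ((i : α), (f i : β)) ∈ E ∧ ((i : α), (g i : β)) ∈ E ∧ f i ≠ g i := by
  obtain ⟨F, hFE, hF, hrow, hcol⟩ := exists_subset_card_fiber_eq_two Prod.fst Prod.snd hE hcard
  have hrow' (i : F.image Prod.fst) :
      #{j : F.image Prod.snd | ((i : α), (j : β)) ∈ F} = 2 := by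
    rw [← hrow i i.2]
    refine card_bij (fun j _ => (i, j)) (by simp) (by grind) fun e he => ?_
    obtain ⟨heF, hei⟩ := mem_filter.mp he
    exact ⟨⟨e.2, mem_image_of_mem _ heF⟩, by simpa [← hei] using heF, Prod.ext hei.symm rfl⟩
  have hcol' (j : F.image Prod.snd) :
      #{i : F.image Prod.fst | ((i : α), (j : β)) ∈ F} = 2 := by
    rw [← hcol j j.2]
    refine card_bij (fun i _ => (i, j)) (by simp) (by grind) fun e he => ?_
    obtain ⟨heF, hej⟩ := mem_filter.mp he
    exact ⟨⟨e.1, mem_image_of_mem _ heF⟩, by simpa [← hej] using heF, Prod.ext rfl hej.symm⟩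
  obtain ⟨f, g, hfg⟩ := exists_disjoint_equivs_of_two_regular
    (fun (i : F.image Prod.fst) (j : F.image Prod.snd) => ((i : α), (j : β)) ∈ F) hrow' hcol'
  exact ⟨_, _, f, g, hF.image _, fun i => ⟨hFE (hfg i).1, hFE (hfg i).2.1, (hfg i).2.2⟩⟩

end Bipartite

section Generic

open Finset

/-- `j` attains the maximum of the row `i` of `M` after adding `y k` to each column `k`, the maximum
being finite. For the modulus of a signed matrix these are the edges of the tangent graph at `y`;
here rows and columns may have any index types, so that the notion applies to square submatrices. -/
def IsMaxEntry {ι κ : Type*} (M : ι → κ → TT) (y : κ → ℝ) (i : ι) (j : κ) : Prop :=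
  M i j ≠ ⊥ ∧ ∀ k, M i k + (y k : TT) ≤ M i j + (y j : TT)

theorem sum_eq_tper_of_isMaxEntry {q : ℕ} {M : Fin q → Fin q → TT} {y : Fin q → ℝ}
    {σ : Equiv.Perm (Fin q)} (hσ : ∀ i, IsMaxEntry M y i (σ i)) : ∑ i, M i (σ i) = tper M := by
  refine le_antisymm (le_sup (f := fun σ : Equiv.Perm (Fin q) => ∑ i, M i (σ i)) (mem_univ σ))
    (Finset.sup_le fun π _ => ?_)
  have hfinite : (∑ i, (y i : TT)) ≠ ⊥ := by simp [WithBot.sum_eq_bot_iff]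
  refine (WithBot.add_le_add_iff_right hfinite).mp ?_
  calc ∑ i, M i (π i) + ∑ i, (y i : TT)
      = ∑ i, (M i (π i) + (y (π i) : TT)) := by
        rw [sum_add_distrib, Equiv.sum_comp π fun i => (y i : TT)]
    _ ≤ ∑ i, (M i (σ i) + (y (σ i) : TT)) := sum_le_sum fun i _ => (hσ i).2 (π i)
    _ = ∑ i, M i (σ i) + ∑ i, (y i : TT) := by
        rw [sum_add_distrib, Equiv.sum_comp σ fun i => (y i : TT)]

variable {m N : ℕ} {M : Fin m → Fin N → TT} {y : Fin N → ℝ}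

theorem TropGeneric.eq_of_isMaxEntry (hgen : TropGeneric M) {R : Finset (Fin m)}
    {C : Finset (Fin N)} {f g : R ≃ C} (hf : ∀ i : R, IsMaxEntry M y i (f i))
    (hg : ∀ i : R, IsMaxEntry M y i (g i)) : f = g := by
  let row : Fin #R ≃ R := R.equivFin.symm
  let π : Equiv.Perm (Fin #R) := (row.trans g).trans (row.trans f).symm
  let U : Fin #R → Fin #R → TT := fun a b => M (row a) (f (row b))
  have hone : ∀ a, IsMaxEntry U (fun b => y (f (row b))) a ((1 : Equiv.Perm (Fin #R)) a) := fun a =>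
    ⟨(hf (row a)).1, fun b => (hf (row a)).2 (f (row b))⟩
  have hπ : ∀ a, IsMaxEntry U (fun b => y (f (row b))) a (π a) := fun a => by
    simpa [IsMaxEntry, U, π] using
      And.intro (hg (row a)).1 fun b => (hg (row a)).2 (f (row b))
  have hfinite : tper U ≠ ⊥ := by
    rw [← sum_eq_tper_of_isMaxEntry hone]
    exact (WithBot.sum_lt_bot fun a _ => (hone a).1).ne'
  have hnonsing : ¬ TropSingular U := (hgen #R (fun a => row a) (fun b => f (row b))
    (Subtype.val_injective.comp row.injective)
    (Subtype.val_injective.comp (f.injective.comp row.injective))).resolve_left hfinite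
  have hπ_one : π = 1 := by
    by_contra hne
    exact hnonsing (Or.inr ⟨π, 1, hne, sum_eq_tper_of_isMaxEntry hπ,
      sum_eq_tper_of_isMaxEntry hone⟩)
  refine Equiv.ext fun i => ?_
  have hfix : π (row.symm i) = row.symm i := by rw [hπ_one, Equiv.Perm.one_apply]
  have hsymm : f.symm (g i) = i := by simpa [π] using hfix
  exact (f.symm_apply_eq.mp hsymm).symm

theorem TropGeneric.card_lt_of_isMaxEntry (hgen : TropGeneric M) {E : Finset (Fin m × Fin N)}
    (hE : E.Nonempty) (hmax : ∀ e ∈ E, IsMaxEntry M y e.1 e.2) :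
    #E < #(E.image Prod.fst) + #(E.image Prod.snd) := by
  by_contra! hcard
  obtain ⟨R, C, f, g, ⟨i, hi⟩, hfg⟩ := exists_disjoint_matchings_of_card_le hE hcard
  have heq : f = g := hgen.eq_of_isMaxEntry
    (fun i : R => hmax _ (hfg i).1) fun i : R => hmax _ (hfg i).2.1
  exact (hfg ⟨i, hi⟩).2.2 (congrArg (· ⟨i, hi⟩) heq)

theorem TropGeneric.sum_card_isMaxEntry_lt (hgen : TropGeneric M) (hN : 0 < N) (y : Fin N → ℝ)
    (R : Finset (Fin m)) : ∑ i ∈ R, #{j | IsMaxEntry M y i j} < #R + N := by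
  let E : Finset (Fin m × Fin N) := {e ∈ R ×ˢ univ | IsMaxEntry M y e.1 e.2}
  have hcard : #E = ∑ i ∈ R, #{j | IsMaxEntry M y i j} := by
    simp only [E, card_filter, sum_product]
  rw [← hcard]
  rcases E.eq_empty_or_nonempty with hE | hE
  · rw [hE, card_empty]
    omega
  · have hrows : E.image Prod.fst ⊆ R := image_subset_iff.mpr fun e he =>
      (mem_product.mp (mem_filter.mp he).1).1
    calc #E < #(E.image Prod.fst) + #(E.image Prod.snd) :=
          hgen.card_lt_of_isMaxEntry hE fun e he => (mem_filter.mp he).2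
      _ ≤ #R + N := add_le_add (card_le_card hrows) (card_finset_fin_le _)

end Generic

section Scalar

variable {c d s t : TT} {l μ : ℝ}

theorem le_of_lt_add_of_add_le_max (hlt : c < s + (μ : TT))
    (hle : s + (μ : TT) ≤ max c (t + (μ : TT))) : s ≤ t := by
  have hst : s + (μ : TT) ≤ t + (μ : TT) := (le_max_iff.mp hle).resolve_left hlt.not_ge
  exact (WithBot.add_le_add_iff_right WithBot.coe_ne_bot).mp hst

theorem add_le_and_add_le_or_eq_of_max_add_eq
    (h : max c (s + (μ : TT)) = max c (t + (μ : TT))) :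
    (s + (μ : TT) ≤ c ∧ t + (μ : TT) ≤ c) ∨ s = t ∧ c < s + (μ : TT) := by
  have hs : s + (μ : TT) ≤ max c (t + (μ : TT)) := h ▸ le_max_right _ _
  have ht : t + (μ : TT) ≤ max c (s + (μ : TT)) := h ▸ le_max_right _ _
  rcases le_or_gt (s + (μ : TT)) c with hsc | hcs
  · exact Or.inl ⟨hsc, by rwa [max_eq_left hsc] at ht⟩
  · have hst : s ≤ t := le_of_lt_add_of_add_le_max hcs hs
    have hct : c < t + (μ : TT) := hcs.trans_le (by gcongr)
    exact Or.inr ⟨hst.antisymm (le_of_lt_add_of_add_le_max hct ht), hcs⟩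

theorem exists_add_eq_of_le_of_lt_add (hsc : s ≤ c) (hcs : c < s + (μ : TT)) :
    ∃ l : ℝ, 0 ≤ l ∧ l ≤ μ ∧ s + (l : TT) = c := by
  have hs : s ≠ ⊥ := fun hs => by simp [hs] at hcs
  have hc : c ≠ ⊥ := fun hc => hs (le_bot_iff.mp (hc ▸ hsc))
  lift s to ℝ using hs
  lift c to ℝ using hc
  norm_cast at hsc hcs
  exact ⟨c - s, sub_nonneg.mpr hsc, by linarith, by norm_cast; ring⟩

theorem eq_of_max_eq_of_max_add_eq (hμ : 0 < μ) (hcs : c ≤ s) (hzero : max c s = max d t)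
    (hend : max c (s + (μ : TT)) = max d (t + (μ : TT))) : s = t := by
  rw [max_eq_right hcs] at hzero
  refine le_antisymm ?_ (hzero ▸ le_max_right d t)
  rcases eq_or_ne s ⊥ with rfl | hs
  · exact bot_le
  · have hlt : s < s + (μ : TT) := by
      lift s to ℝ using hs
      norm_cast
      linarith
    have hds : d ≤ s := hzero ▸ le_max_left d t
    exact le_of_lt_add_of_add_le_max (hds.trans_lt hlt) (hend ▸ le_max_right _ _)

theorem max_add_eq_max_add_of_le (hμ : 0 < μ) (hl : 0 ≤ l) (hcs : c ≤ s)
    (hzero : max c s = max d t) (hend : max c (s + (μ : TT)) = max d (t + (μ : TT))) :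
    max c (s + (l : TT)) = max d (t + (l : TT)) := by
  obtain rfl := eq_of_max_eq_of_max_add_eq hμ hcs hzero hend
  have hds : d ≤ s := max_eq_right hcs ▸ hzero ▸ le_max_left d s
  have hsl : s ≤ s + (l : TT) := le_add_of_nonneg_right (by exact_mod_cast hl)
  rw [max_eq_right (hcs.trans hsl), max_eq_right (hds.trans hsl)]

theorem max_add_eq_max_add (hμ : 0 < μ) (hl : 0 ≤ l) (hzero : max c s = max d t)
    (hend : max c (s + (μ : TT)) = max d (t + (μ : TT)))
    (hbound : s < c → t < d → s + (l : TT) ≤ c ∧ t + (l : TT) ≤ d) :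
    max c (s + (l : TT)) = max d (t + (l : TT)) := by
  rcases le_or_gt c s with hcs | hsc
  · exact max_add_eq_max_add_of_le hμ hl hcs hzero hend
  rcases le_or_gt d t with hdt | htd
  · exact (max_add_eq_max_add_of_le hμ hl hdt hzero.symm hend.symm).symm
  obtain ⟨hs, ht⟩ := hbound hsc htd
  rw [max_eq_left hs, max_eq_left ht, ← max_eq_left hsc.le, ← max_eq_left htd.le, hzero]

theorem max_add_le_max_add (hl : 0 ≤ l) (hzero : max d t ≤ max c s)
    (hbound : s < c → s ≤ t → t + (l : TT) ≤ c) :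
    max d (t + (l : TT)) ≤ max c (s + (l : TT)) := by
  have hsl : s ≤ s + (l : TT) := le_add_of_nonneg_right (by exact_mod_cast hl)
  refine max_le ((le_max_left d t).trans (hzero.trans (max_le_max le_rfl hsl))) ?_
  rcases le_total t s with hts | hst
  · exact le_max_of_le_right (by gcongr)
  rcases lt_or_ge s c with hsc | hcs
  · exact le_max_of_le_left (hbound hsc hst)
  · have hts : t ≤ s := max_eq_right hcs ▸ (le_max_right d t).trans hzero
    exact le_max_of_le_right (by gcongr)

theorem coe_le_tE_sub_tE_iff {p : TT} (hp : p ≠ ⊥) :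
    (l : EReal) ≤ tE p - tE s ↔ s + (l : TT) ≤ p := by
  lift p to ℝ using hp
  induction s using WithBot.recBotCoe with
  | bot => simp [tE]
  | coe s =>
    simp only [tE, WithBot.recBotCoe_coe]
    norm_cast
    rw [le_sub_iff_add_le']

theorem tE_sub_tE_le_tE_sub_tE_iff {p : TT} (hp : p ≠ ⊥) :
    tE p - tE s ≤ tE p - tE t ↔ t ≤ s := by
  lift p to ℝ using hp
  induction s using WithBot.recBotCoe with
  | bot => induction t using WithBot.recBotCoe <;> simp [tE, ← EReal.coe_sub]
  | coe s =>
    induction t using WithBot.recBotCoe with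
    | bot => simp [tE]
    | coe t =>
      simp only [tE, WithBot.recBotCoe_coe]
      norm_cast
      exact sub_le_sub_iff_left p

end Scalar

section PartialDot

open Finset

/-- The tropical dot product of `a` and the real vector `x`, with the maximum restricted to the
coordinates in `S`; along `x + l • eJ J` only the part over `J` moves. -/
def tdotOn {n : ℕ} (S : Finset (Fin (n + 1))) (a : Fin (n + 1) → TT) (x : Fin (n + 1) → ℝ) : TT :=
  S.sup fun j => a j + (x j : TT)

variable {m n : ℕ} {S J : Finset (Fin (n + 1))} {a : Fin (n + 1) → TT} {x : Fin (n + 1) → ℝ}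

theorem le_tdot (a : Fin (n + 1) → TT) (x : Fin (n + 1) → ℝ) (j : Fin (n + 1)) :
    a j + (x j : TT) ≤ tdot a (toT x) :=
  le_sup (f := fun j => a j + toT x j) (mem_univ j)

theorem exists_mem_eq_tdotOn (hne : tdotOn S a x ≠ ⊥) :
    ∃ j ∈ S, a j + (x j : TT) = tdotOn S a x := by
  have hS : S.Nonempty := nonempty_iff_ne_empty.mpr fun hS => hne (by rw [hS]; rfl)
  obtain ⟨j, hj, hsup⟩ := exists_mem_eq_sup S hS fun j => a j + (x j : TT)
  exact ⟨j, hj, hsup.symm⟩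

theorem tdot_eq_max (J : Finset (Fin (n + 1))) (a : Fin (n + 1) → TT) (x : Fin (n + 1) → ℝ) :
    tdot a (toT x) = max (tdotOn Jᶜ a x) (tdotOn J a x) := by
  rw [tdot, ← union_compl J, sup_union, sup_comm]
  rfl

theorem tdotOn_shift (J : Finset (Fin (n + 1))) (a : Fin (n + 1) → TT) (x : Fin (n + 1) → ℝ)
    (l : ℝ) : tdotOn J a (x + l • eJ J) = tdotOn J a x + (l : TT) := by
  have hmono : Monotone fun t : TT => t + (l : TT) := fun _ _ h => add_le_add h le_rfl
  rw [tdotOn, tdotOn, apply_sup_eq_sup_comp_of_linearOrder (fun t : TT => t + (l : TT)) hmono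
    (WithBot.bot_add _)]
  refine sup_congr rfl fun j hj => ?_
  simp [eJ, hj, add_assoc]

theorem tdotOn_compl_shift (J : Finset (Fin (n + 1))) (a : Fin (n + 1) → TT)
    (x : Fin (n + 1) → ℝ) (l : ℝ) : tdotOn Jᶜ a (x + l • eJ J) = tdotOn Jᶜ a x := by
  refine sup_congr rfl fun j hj => ?_
  simp [eJ, mem_compl.mp hj]

theorem tdot_shift (J : Finset (Fin (n + 1))) (a : Fin (n + 1) → TT) (x : Fin (n + 1) → ℝ)
    (l : ℝ) :
    tdot a (toT (x + l • eJ J)) = max (tdotOn Jᶜ a x) (tdotOn J a x + (l : TT)) := by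
  rw [tdot_eq_max J, tdotOn_shift, tdotOn_compl_shift]

theorem forall_mem_ne_tdot_iff (hne : tdot a (toT x) ≠ ⊥) :
    (∀ j ∈ J, a j + (x j : TT) ≠ tdot a (toT x)) ↔ tdotOn J a x < tdotOn Jᶜ a x := by
  have hlt : tdotOn J a x < tdotOn Jᶜ a x ↔ tdotOn J a x < tdot a (toT x) := by
    simp [tdot_eq_max J a x]
  rw [hlt, tdotOn, Finset.sup_lt_iff (bot_lt_iff_ne_bot.mpr hne)]
  exact forall₂_congr fun j _ => (le_tdot a x j).lt_iff_ne.symm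

variable {Wp Wn : Fin m → Fin (n + 1) → TT} {i : Fin m} {l : ℝ}

theorem coe_le_lamP_iff (hne : tdot (Wp i) (toT x) ≠ ⊥) :
    (l : EReal) ≤ lamP Wp i x J ↔ tdotOn J (Wp i) x + (l : TT) ≤ tdot (Wp i) (toT x) :=
  coe_le_tE_sub_tE_iff hne

theorem coe_le_lamM_iff (hne : tdot (Wp i) (toT x) ≠ ⊥) :
    (l : EReal) ≤ lamM Wp Wn i x J ↔ tdotOn J (Wn i) x + (l : TT) ≤ tdot (Wp i) (toT x) :=
  coe_le_tE_sub_tE_iff hne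

theorem lamM_le_lamP_iff (hne : tdot (Wp i) (toT x) ≠ ⊥) :
    lamM Wp Wn i x J ≤ lamP Wp i x J ↔ tdotOn J (Wp i) x ≤ tdotOn J (Wn i) x :=
  tE_sub_tE_le_tE_sub_tE_iff hne

end PartialDot

section TangentDegrees

open Finset

variable {m n : ℕ}

/-- The coordinate nodes adjacent to the hyperplane node `i` in the tangent graph at `x`; this set
is empty if `i` is not a hyperplane node at `x`. -/
def tangentNeighbors (Wp Wn : Fin m → Fin (n + 1) → TT) (x : Fin (n + 1) → ℝ) (i : Fin m) :
    Finset (Fin (n + 1)) :=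
  {j | isTEdge Wp Wn x i j}

variable {Wp Wn : Fin m → Fin (n + 1) → TT} {x : Fin (n + 1) → ℝ} {i : Fin m}
  {j : Fin (n + 1)} {S J : Finset (Fin (n + 1))}

theorem tmod_add (Wp Wn : Fin m → Fin (n + 1) → TT) (i : Fin m) (j : Fin (n + 1)) (t : TT) :
    tmod Wp Wn i j + t = max (Wp i j + t) (Wn i j + t) :=
  (max_add_add_right _ _ _).symm

theorem tdot_tmod (Wp Wn : Fin m → Fin (n + 1) → TT) (i : Fin m) (x : Fin (n + 1) → ℝ) :
    tdot (tmod Wp Wn i) (toT x) = max (tdot (Wp i) (toT x)) (tdot (Wn i) (toT x)) := by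
  simp only [tdot, tmod_add]
  exact sup_sup

theorem isMaxEntry_tmod_of_isTEdge (hedge : isTEdge Wp Wn x i j) :
    IsMaxEntry (tmod Wp Wn) x i j := by
  obtain ⟨⟨-, hpos⟩, hj⟩ := hedge
  refine ⟨fun hbot => ?_, fun k => hj ▸ le_tdot _ _ _⟩
  rw [hbot, WithBot.bot_add, tdot_tmod] at hj
  exact (hpos.trans_le (le_max_left _ _)).ne hj

theorem mem_tangentNeighbors (hhyp : isHypNode Wp Wn x i)
    (hj : tdot (Wp i) (toT x) ≤ tmod Wp Wn i j + (x j : TT)) :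
    j ∈ tangentNeighbors Wp Wn x i := by
  refine (mem_filter_univ _).mpr ⟨hhyp, (le_tdot _ _ _).antisymm ?_⟩
  rwa [tdot_tmod, ← hhyp.1, max_self]

theorem exists_mem_tangentNeighbors_inter {a : Fin (n + 1) → TT} (ha : a ≤ tmod Wp Wn i)
    (hhyp : isHypNode Wp Wn x i) (hS : tdotOn S a x = tdot (Wp i) (toT x)) :
    ∃ j ∈ tangentNeighbors Wp Wn x i ∩ S, a j ≠ ⊥ := by
  obtain ⟨j, hjS, hj⟩ := exists_mem_eq_tdotOn (hS ▸ hhyp.2.ne')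
  rw [hS] at hj
  refine ⟨j, mem_inter.mpr ⟨mem_tangentNeighbors hhyp ?_, hjS⟩, fun hbot => ?_⟩
  · exact hj ▸ add_le_add (ha j) le_rfl
  · exact hhyp.2.ne (by rw [← hj, hbot, WithBot.bot_add])

theorem two_le_card_tangentNeighbors_inter (hsign : ∀ j, min (Wp i j) (Wn i j) = ⊥)
    (hhyp : isHypNode Wp Wn x i) (hP : tdotOn S (Wp i) x = tdot (Wp i) (toT x))
    (hN : tdotOn S (Wn i) x = tdot (Wn i) (toT x)) :
    2 ≤ #(tangentNeighbors Wp Wn x i ∩ S) := by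
  obtain ⟨j, hj, hWp⟩ := exists_mem_tangentNeighbors_inter (fun _ => le_max_left _ _) hhyp hP
  obtain ⟨k, hk, hWn⟩ :=
    exists_mem_tangentNeighbors_inter (fun _ => le_max_right _ _) hhyp (hN.trans hhyp.1.symm)
  refine one_lt_card.mpr ⟨j, hj, k, hk, ?_⟩
  rintro rfl
  exact (min_eq_bot.mp (hsign j)).elim hWp hWn

theorem two_le_card_tangentNeighbors (hsign : ∀ j, min (Wp i j) (Wn i j) = ⊥)
    (hhyp : isHypNode Wp Wn x i) : 2 ≤ #(tangentNeighbors Wp Wn x i) := by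
  simpa using two_le_card_tangentNeighbors_inter (S := univ) hsign hhyp rfl rfl

theorem three_le_card_tangentNeighbors (hsign : ∀ j, min (Wp i j) (Wn i j) = ⊥)
    (hhyp : isHypNode Wp Wn x i) (hP : tdotOn J (Wp i) x = tdotOn Jᶜ (Wp i) x)
    (hN : tdotOn J (Wn i) x = tdot (Wn i) (toT x)) :
    3 ≤ #(tangentNeighbors Wp Wn x i) := by
  have hdot : tdotOn Jᶜ (Wp i) x = tdot (Wp i) (toT x) := by rw [tdot_eq_max J, hP, max_self]
  have hJ := two_le_card_tangentNeighbors_inter hsign hhyp (hP.trans hdot) hN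
  obtain ⟨j, hj, -⟩ := exists_mem_tangentNeighbors_inter (fun _ => le_max_left _ _) hhyp hdot
  rw [← card_inter_add_card_sdiff _ J, sdiff_eq_inter_compl]
  exact add_le_add hJ (card_pos.mpr ⟨j, hj⟩)

theorem four_le_card_tangentNeighbors (hsign : ∀ j, min (Wp i j) (Wn i j) = ⊥)
    (hhyp : isHypNode Wp Wn x i) (hP : tdotOn J (Wp i) x = tdotOn Jᶜ (Wp i) x)
    (hN : tdotOn J (Wn i) x = tdotOn Jᶜ (Wn i) x) :
    4 ≤ #(tangentNeighbors Wp Wn x i) := by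
  have hPdot : tdotOn Jᶜ (Wp i) x = tdot (Wp i) (toT x) := by rw [tdot_eq_max J, hP, max_self]
  have hNdot : tdotOn Jᶜ (Wn i) x = tdot (Wn i) (toT x) := by rw [tdot_eq_max J, hN, max_self]
  rw [← card_inter_add_card_sdiff _ J, sdiff_eq_inter_compl]
  exact add_le_add
    (two_le_card_tangentNeighbors_inter hsign hhyp (hP.trans hPdot) (hN.trans hNdot))
    (two_le_card_tangentNeighbors_inter hsign hhyp hPdot hNdot)

theorem card_add_card_tangentNeighbors_le (hsign : ∀ i j, min (Wp i j) (Wn i j) = ⊥)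
    (hgen : TropGeneric (tmod Wp Wn)) {R : Finset (Fin m)}
    (hR : ∀ i ∈ R, isHypNode Wp Wn x i) (hi : i ∈ R) :
    #R + #(tangentNeighbors Wp Wn x i) ≤ n + 2 := by
  have hlt : ∑ k ∈ R, #(tangentNeighbors Wp Wn x k) < #R + (n + 1) := by
    refine (sum_le_sum fun k _ => card_le_card fun j hj => ?_).trans_lt
      (hgen.sum_card_isMaxEntry_lt n.succ_pos x R)
    exact (mem_filter_univ _).mpr (isMaxEntry_tmod_of_isTEdge ((mem_filter_univ _).mp hj))
  have hothers : #(R.erase i) * 2 ≤ ∑ k ∈ R.erase i, #(tangentNeighbors Wp Wn x k) :=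
    card_nsmul_le_sum _ _ _ fun k hk =>
      two_le_card_tangentNeighbors (hsign k) (hR k (mem_of_mem_erase hk))
  rw [← add_sum_erase R _ hi] at hlt
  have hcard := card_erase_add_one hi
  omega

end TangentDegrees

section Edge

open Finset

variable {m n : ℕ} {Wp Wn : Fin m → Fin (n + 1) → TT} {K : Finset (Fin m)}
  {x ξ : Fin (n + 1) → ℝ} {i : Fin m} {J : Finset (Fin (n + 1))} {l μ : ℝ}

theorem tdot_ne_bot_of_mem_coneC (hrow : ∃ j, max (Wp i j) (Wn i j) ≠ ⊥)
    (hx : toT x ∈ coneC Wp Wn) : tdot (Wp i) (toT x) ≠ ⊥ := by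
  obtain ⟨j, hj⟩ := hrow
  have hle : tmod Wp Wn i j + (x j : TT) ≤ tdot (Wp i) (toT x) :=
    (le_tdot _ _ _).trans (by rw [tdot_tmod, max_eq_left (hx i)])
  intro hbot
  rw [hbot, le_bot_iff, WithBot.add_eq_bot] at hle
  exact hle.elim hj WithBot.coe_ne_bot

theorem isHypNode_of_mem_edgeEK (hrow : ∃ j, max (Wp i j) (Wn i j) ≠ ⊥)
    (hx : toT x ∈ edgeEK Wp Wn K) (hi : i ∈ K) : isHypNode Wp Wn x i :=
  ⟨hx.1 i hi, bot_lt_iff_ne_bot.mpr (tdot_ne_bot_of_mem_coneC hrow hx.2)⟩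

theorem card_tangentNeighbors_le_three (hsign : ∀ i j, min (Wp i j) (Wn i j) = ⊥)
    (hrow : ∀ i, ∃ j, max (Wp i j) (Wn i j) ≠ ⊥) (hgen : TropGeneric (tmod Wp Wn))
    (hK : n ≤ #K + 1) (hx : toT x ∈ edgeEK Wp Wn K) (hi : i ∈ K) :
    #(tangentNeighbors Wp Wn x i) ≤ 3 := by
  have hcard := card_add_card_tangentNeighbors_le hsign hgen
    (fun k hk => isHypNode_of_mem_edgeEK (hrow k) hx hk) hi
  omega

theorem card_tangentNeighbors_le_two (hsign : ∀ i j, min (Wp i j) (Wn i j) = ⊥)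
    (hrow : ∀ i, ∃ j, max (Wp i j) (Wn i j) ≠ ⊥) (hgen : TropGeneric (tmod Wp Wn))
    (hK : n ≤ #K + 1) (hx : toT x ∈ edgeEK Wp Wn K) (hi : i ∉ K)
    (hhyp : isHypNode Wp Wn x i) : #(tangentNeighbors Wp Wn x i) ≤ 2 := by
  have hR : ∀ k ∈ insert i K, isHypNode Wp Wn x k :=
    forall_mem_insert _ _ _ |>.mpr ⟨hhyp, fun k hk => isHypNode_of_mem_edgeEK (hrow k) hx hk⟩
  have hcard := card_add_card_tangentNeighbors_le hsign hgen hR (mem_insert_self i K)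
  rw [card_insert_of_notMem hi] at hcard
  omega

theorem mem_brkSet_iff (hhyp : isHypNode Wp Wn ξ i) (hi : i ∈ K) :
    i ∈ brkSet Wp Wn K ξ J ↔
      tdotOn J (Wp i) ξ < tdotOn Jᶜ (Wp i) ξ ∧ tdotOn J (Wn i) ξ < tdotOn Jᶜ (Wn i) ξ := by
  rw [← forall_mem_ne_tdot_iff hhyp.2.ne', ← forall_mem_ne_tdot_iff (hhyp.1 ▸ hhyp.2.ne')]
  exact and_iff_right hi

theorem mem_entSet_iff (hne : tdot (Wp i) (toT ξ) ≠ ⊥) (hi : i ∉ K) :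
    i ∈ entSet Wp K ξ J ↔ tdotOn J (Wp i) ξ < tdotOn Jᶜ (Wp i) ξ := by
  rw [← forall_mem_ne_tdot_iff hne]
  exact and_iff_right hi

theorem le_min_lamP_lamM_of_mem_brkSet (hsign : ∀ i j, min (Wp i j) (Wn i j) = ⊥)
    (hrow : ∀ i, ∃ j, max (Wp i j) (Wn i j) ≠ ⊥) (hgen : TropGeneric (tmod Wp Wn))
    (hK : n ≤ #K + 1) (hμ : 0 ≤ μ)
    (hmem : ∀ l : ℝ, 0 ≤ l → l ≤ μ → toT (ξ + l • eJ J) ∈ edgeEK Wp Wn K)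
    (hi : i ∈ brkSet Wp Wn K ξ J) :
    (μ : EReal) ≤ min (lamP Wp i ξ J) (lamM Wp Wn i ξ J) := by
  have hhyp : isHypNode Wp Wn ξ i :=
    isHypNode_of_mem_edgeEK (hrow i) (by simpa using hmem 0 le_rfl hμ) hi.1
  obtain ⟨hP, hN⟩ := (mem_brkSet_iff hhyp hi.1).mp hi
  have hPdot : tdot (Wp i) (toT ξ) = tdotOn Jᶜ (Wp i) ξ := by
    rw [tdot_eq_max J, max_eq_left hP.le]
  have hcompl : tdotOn Jᶜ (Wn i) ξ = tdotOn Jᶜ (Wp i) ξ := by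
    rw [← hPdot, hhyp.1, tdot_eq_max J, max_eq_left hN.le]
  have hend : tdot (Wp i) (toT (ξ + μ • eJ J)) = tdot (Wn i) (toT (ξ + μ • eJ J)) :=
    (hmem μ hμ le_rfl).1 i hi.1
  rw [tdot_shift, tdot_shift, hcompl] at hend
  rcases add_le_and_add_le_or_eq_of_max_add_eq hend with hle | ⟨heq, hlt⟩
  · rw [le_min_iff, coe_le_lamP_iff hhyp.2.ne', coe_le_lamM_iff hhyp.2.ne', hPdot]
    exact hle
  -- Both sides of row `i` switch their maximum from `Jᶜ` to `J` at the same point of the segment.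
  · obtain ⟨l, hl, hlμ, hcross⟩ := exists_add_eq_of_le_of_lt_add hP.le hlt
    have hfour : 4 ≤ #(tangentNeighbors Wp Wn (ξ + l • eJ J) i) :=
      four_le_card_tangentNeighbors (J := J) (hsign i)
        (isHypNode_of_mem_edgeEK (hrow i) (hmem l hl hlμ) hi.1)
        (by rw [tdotOn_shift, tdotOn_compl_shift, hcross])
        (by rw [tdotOn_shift, tdotOn_compl_shift, ← heq, hcross, hcompl])
    have hle := card_tangentNeighbors_le_three hsign hrow hgen hK (hmem l hl hlμ) hi.1
    omega

theorem le_lamM_of_mem_entSet (hsign : ∀ i j, min (Wp i j) (Wn i j) = ⊥)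
    (hrow : ∀ i, ∃ j, max (Wp i j) (Wn i j) ≠ ⊥) (hgen : TropGeneric (tmod Wp Wn))
    (hK : n ≤ #K + 1) (hμ : 0 ≤ μ)
    (hmem : ∀ l : ℝ, 0 ≤ l → l ≤ μ → toT (ξ + l • eJ J) ∈ edgeEK Wp Wn K)
    (hi : i ∈ entSet Wp K ξ J) (hlam : lamM Wp Wn i ξ J ≤ lamP Wp i ξ J) :
    (μ : EReal) ≤ lamM Wp Wn i ξ J := by
  have hne : tdot (Wp i) (toT ξ) ≠ ⊥ :=
    tdot_ne_bot_of_mem_coneC (hrow i) (by simpa using (hmem 0 le_rfl hμ).2)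
  have hP : tdotOn J (Wp i) ξ < tdotOn Jᶜ (Wp i) ξ := (mem_entSet_iff hne hi.1).mp hi
  have hJ : tdotOn J (Wp i) ξ ≤ tdotOn J (Wn i) ξ := (lamM_le_lamP_iff hne).mp hlam
  rw [coe_le_lamM_iff hne, tdot_eq_max J, max_eq_left hP.le]
  by_contra! hlt
  have hend := (hmem μ hμ le_rfl).2 i
  rw [tdot_shift, tdot_shift] at hend
  have heq : tdotOn J (Wp i) ξ = tdotOn J (Wn i) ξ :=
    hJ.antisymm (le_of_lt_add_of_add_le_max hlt ((le_max_right _ _).trans hend))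
  rw [← heq] at hlt
  -- Row `i` becomes active at the point where its positive side switches from `Jᶜ` to `J`.
  obtain ⟨l, hl, hlμ, hcross⟩ := exists_add_eq_of_le_of_lt_add hP.le hlt
  have hx := hmem l hl hlμ
  have hPdot : tdot (Wp i) (toT (ξ + l • eJ J)) = tdotOn J (Wn i) (ξ + l • eJ J) := by
    rw [tdot_shift, hcross, max_self, tdotOn_shift, ← heq, hcross]
  have hNdot : tdot (Wn i) (toT (ξ + l • eJ J)) = tdotOn J (Wn i) (ξ + l • eJ J) :=
    le_antisymm (hPdot ▸ hx.2 i) (by rw [tdot_eq_max J]; exact le_max_right _ _)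
  have hhyp : isHypNode Wp Wn (ξ + l • eJ J) i :=
    ⟨hPdot.trans hNdot.symm, bot_lt_iff_ne_bot.mpr (tdot_ne_bot_of_mem_coneC (hrow i) hx.2)⟩
  have hthree : 3 ≤ #(tangentNeighbors Wp Wn (ξ + l • eJ J) i) :=
    three_le_card_tangentNeighbors (J := J) (hsign i) hhyp
      (by rw [tdotOn_shift, tdotOn_compl_shift, hcross]) hNdot.symm
  have hle := card_tangentNeighbors_le_two hsign hrow hgen hK hx hi.1 hhyp
  omega

theorem tdot_shift_eq_of_mem (hrow : ∃ j, max (Wp i j) (Wn i j) ≠ ⊥) (hμ : 0 < μ)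
    (hl : 0 ≤ l) (hξ : toT ξ ∈ edgeEK Wp Wn K) (hend : toT (ξ + μ • eJ J) ∈ edgeEK Wp Wn K)
    (hi : i ∈ K)
    (hbrk : i ∈ brkSet Wp Wn K ξ J → (l : EReal) ≤ min (lamP Wp i ξ J) (lamM Wp Wn i ξ J)) :
    tdot (Wp i) (toT (ξ + l • eJ J)) = tdot (Wn i) (toT (ξ + l • eJ J)) := by
  have hhyp := isHypNode_of_mem_edgeEK hrow hξ hi
  have hzero : tdot (Wp i) (toT ξ) = tdot (Wn i) (toT ξ) := hhyp.1
  have hend : tdot (Wp i) (toT (ξ + μ • eJ J)) = tdot (Wn i) (toT (ξ + μ • eJ J)) := hend.1 i hi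
  simp only [tdot_shift, tdot_eq_max J _ ξ] at hzero hend ⊢
  refine max_add_eq_max_add hμ hl hzero hend fun hP hN => ?_
  have hbound := hbrk ((mem_brkSet_iff hhyp hi).mpr ⟨hP, hN⟩)
  rw [le_min_iff, coe_le_lamP_iff hhyp.2.ne', coe_le_lamM_iff hhyp.2.ne'] at hbound
  refine ⟨?_, ?_⟩
  · rw [← max_eq_left hP.le, ← tdot_eq_max]
    exact hbound.1
  · rw [← max_eq_left hN.le, ← tdot_eq_max, ← hhyp.1]
    exact hbound.2

theorem tdot_shift_le_of_mem (hrow : ∃ j, max (Wp i j) (Wn i j) ≠ ⊥) (hl : 0 ≤ l)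
    (hξ : toT ξ ∈ coneC Wp Wn) (hi : i ∉ K)
    (hent : i ∈ entSet Wp K ξ J → lamM Wp Wn i ξ J ≤ lamP Wp i ξ J →
      (l : EReal) ≤ lamM Wp Wn i ξ J) :
    tdot (Wn i) (toT (ξ + l • eJ J)) ≤ tdot (Wp i) (toT (ξ + l • eJ J)) := by
  have hne := tdot_ne_bot_of_mem_coneC hrow hξ
  have hzero := hξ i
  simp only [tdot_shift, tdot_eq_max J _ ξ] at hzero ⊢
  refine max_add_le_max_add hl hzero fun hP hJ => ?_
  have hbound := hent ((mem_entSet_iff hne hi).mpr hP) ((lamM_le_lamP_iff hne).mpr hJ)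
  rwa [coe_le_lamM_iff hne, tdot_eq_max J, max_eq_left hP.le] at hbound

theorem shift_mem_edgeEK (hrow : ∀ i, ∃ j, max (Wp i j) (Wn i j) ≠ ⊥) (hμ : 0 < μ)
    (hl : 0 ≤ l) (hξ : toT ξ ∈ edgeEK Wp Wn K) (hend : toT (ξ + μ • eJ J) ∈ edgeEK Wp Wn K)
    (hbrk : ∀ i ∈ brkSet Wp Wn K ξ J, (l : EReal) ≤ min (lamP Wp i ξ J) (lamM Wp Wn i ξ J))
    (hent : ∀ i ∈ entSet Wp K ξ J, lamM Wp Wn i ξ J ≤ lamP Wp i ξ J →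
      (l : EReal) ≤ lamM Wp Wn i ξ J) :
    toT (ξ + l • eJ J) ∈ edgeEK Wp Wn K := by
  have heq : ∀ i ∈ K, tdot (Wp i) (toT (ξ + l • eJ J)) = tdot (Wn i) (toT (ξ + l • eJ J)) :=
    fun i hi => tdot_shift_eq_of_mem (hrow i) hμ hl hξ hend hi (hbrk i)
  refine ⟨heq, fun i => ?_⟩
  by_cases hi : i ∈ K
  · exact (heq i hi).ge
  · exact tdot_shift_le_of_mem (hrow i) hl hξ.2 hi (hent i)

end Edge

theorem stmt12_general {m n : ℕ} (Wp Wn : Fin m → Fin (n + 1) → TT)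
    (hsign : ∀ i j, min (Wp i j) (Wn i j) = ⊥)
    (hrow : ∀ i, ∃ j, max (Wp i j) (Wn i j) ≠ ⊥)
    (hgen : TropGeneric (tmod Wp Wn))
    (K : Finset (Fin m)) (hK : n ≤ K.card + 1)
    (ξ : Fin (n + 1) → ℝ) (J : Finset (Fin (n + 1))) (μ : ℝ)
    (hseg : IsOrdSeg Wp Wn K ξ J μ) :
    (∀ i ∈ brkSet Wp Wn K ξ J,
      (μ : EReal) ≤ min (lamP Wp i ξ J) (lamM Wp Wn i ξ J)) ∧
    (∀ i ∈ entSet Wp K ξ J,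
      lamM Wp Wn i ξ J ≤ lamP Wp i ξ J → (μ : EReal) ≤ lamM Wp Wn i ξ J) ∧
    ∀ lam : ℝ, 0 ≤ lam →
      (∀ i ∈ brkSet Wp Wn K ξ J,
        (lam : EReal) ≤ min (lamP Wp i ξ J) (lamM Wp Wn i ξ J)) →
      (∀ i ∈ entSet Wp K ξ J,
        lamM Wp Wn i ξ J ≤ lamP Wp i ξ J → (lam : EReal) ≤ lamM Wp Wn i ξ J) →
      lam ≤ μ := by
  obtain ⟨hμ, -, -, hmem, -, hmax⟩ := hseg
  refine ⟨fun i => le_min_lamP_lamM_of_mem_brkSet hsign hrow hgen hK hμ.le hmem,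
    fun i => le_lamM_of_mem_entSet hsign hrow hgen hK hμ.le hmem,
    fun lam hlam hbrk hent => ?_⟩
  by_contra! hlt
  have hξ : toT ξ ∈ edgeEK Wp Wn K := by simpa using hmem 0 le_rfl hμ.le
  refine hmax (lam - μ) (sub_pos.mpr hlt) ?_
  rw [add_sub_cancel]
  exact shift_mem_edgeEK hrow hμ hlam hξ (hmem μ hμ.le le_rfl) hbrk hent

/-- The length `μ` of an ordinary segment of `E_K` is the
greatest `λ ≥ 0` with `λ ≤ min(λ⁺_i, λ⁻_i)` for `i ∈ B(ξ,J)` and `λ ≤ λ⁻_i`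
for those `i ∈ Λ(ξ,J)` with `λ⁻_i ≤ λ⁺_i`. -/
theorem stmt12 {m n : ℕ} (Wp Wn : Fin m → Fin (n + 1) → TT)
    (hsign : ∀ i j, min (Wp i j) (Wn i j) = ⊥)
    (hrow : ∀ i, ∃ j, max (Wp i j) (Wn i j) ≠ ⊥)
    (hgen : TropGeneric (tmod Wp Wn))
    (hfin : ∀ x ∈ coneC Wp Wn, x ≠ (fun _ => (⊥ : TT)) → ∀ j, x j ≠ ⊥)
    (K : Finset (Fin m)) (hK : K.card + 1 = n)
    (hU : ∃ (er : Fin K.card → Fin m) (ec : Fin K.card → Fin (n + 1)),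
      Function.Injective er ∧ (∀ a, er a ∈ K) ∧ Function.Injective ec ∧
      (∀ a, ec a ≠ Fin.last n) ∧ ⊥ < tper (fun a b => tmod Wp Wn (er a) (ec b)))
    (hEK : ∃ y : Fin (n + 1) → ℝ, toT y ∈ edgeEK Wp Wn K)
    (ξ : Fin (n + 1) → ℝ) (J : Finset (Fin (n + 1))) (μ : ℝ)
    (hseg : IsOrdSeg Wp Wn K ξ J μ) :
    (∀ i ∈ brkSet Wp Wn K ξ J,
      (μ : EReal) ≤ min (lamP Wp i ξ J) (lamM Wp Wn i ξ J)) ∧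
    (∀ i ∈ entSet Wp K ξ J,
      lamM Wp Wn i ξ J ≤ lamP Wp i ξ J → (μ : EReal) ≤ lamM Wp Wn i ξ J) ∧
    ∀ lam : ℝ, 0 ≤ lam →
      (∀ i ∈ brkSet Wp Wn K ξ J,
        (lam : EReal) ≤ min (lamP Wp i ξ J) (lamM Wp Wn i ξ J)) →
      (∀ i ∈ entSet Wp K ξ J,
        lamM Wp Wn i ξ J ≤ lamP Wp i ξ J → (lam : EReal) ≤ lamM Wp Wn i ξ J) →
      lam ≤ μ :=
  stmt12_general Wp Wn hsign hrow hgen K hK.ge ξ J μ hseg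
end
end

section
/- Let [ξ, ξ'] = {ξ + λe^J : 0 ≤ λ ≤ μ} (with μ > 0) be an ordinary segment of the tropical edge E_K whose endpoint ξ is a tropical basic point, ξ = x^{K∪{ℓ}} with ℓ ∈ [m]∖K. Then the common tangent digraph D_{]ξ,ξ'[} of the points of the open segment {ξ + λe^J : 0 < λ < μ} is obtained from D_ξ by deleting the hyperplane node ℓ and its incident arcs. -/
open scoped Classical

noncomputable section

/-!
Genericity makes every tangent graph a forest: a cycle would give two optimal permutations of a
square submatrix. At an interior point of the segment, moving in direction `e^J` keeps exactly the
neighbours in `J` of a hyperplane node that has some, and moving backwards keeps exactly those in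
`Jᶜ`. Since the segment stays in the cone, every hyperplane node therefore has two neighbours in `J`
or two in `Jᶜ`. The induced forests on `J` and on `Jᶜ` admit at most `#J - 1` and `#Jᶜ - 1` such
nodes, altogether `n - 1 = #K`; so the hyperplane nodes are exactly `K`, and the neighbours of each
lie on one side only. At `ξ` the same counting gives exactly the nodes `K ∪ {ℓ}`, each of degree
two, and again those in `K` are one-sided. Neighbours can pass from `Jᶜ` to `J` only through a point
where both sides are met, so the neighbourhoods of the nodes in `K` are the same as at `ξ`.
-/

section Circulations

open scoped Finset

theorem periodicPts_nonempty {α : Type*} [Finite α] [Nonempty α] (f : α → α) :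
    (Function.periodicPts f).Nonempty := by
  obtain ⟨x⟩ := ‹Nonempty α›
  obtain ⟨a, b, hne, heq⟩ := Finite.exists_ne_map_eq_of_infinite fun k : ℕ => f^[k] x
  wlog hlt : a < b generalizing a b
  · exact this b a hne.symm heq.symm (by lia)
  refine ⟨f^[a] x, Function.mk_mem_periodicPts (n := b - a) (by lia) ?_⟩
  rw [Function.IsPeriodicPt, Function.IsFixedPt, ← Function.iterate_add_apply,
    Nat.sub_add_cancel hlt.le]
  exact heq.symm

universe u

variable {I : Type u} {J : Type*} [Fintype I] [Fintype J]

theorem exists_neg_of_sum_eq_zero {R : Type*} [AddCommGroup R] [LinearOrder R]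
    [IsOrderedAddMonoid R] {f : I → R} (hsum : ∑ i, f i = 0) {i : I} (hi : f i ≠ 0) :
    ∃ j, f j < 0 := by
  obtain ⟨j, -, hj⟩ := Finset.exists_pos_of_sum_zero_of_exists_nonzero (s := Finset.univ)
    (fun i => -f i) (by simp [hsum]) ⟨i, Finset.mem_univ i, neg_ne_zero.mpr hi⟩
  exact ⟨j, neg_pos.mp hj⟩

/- Leaving each row through a negative entry and each column through a positive one makes the
cycle simple: the column is a function of the row, and the next row a function of the column. -/
theorem exists_alternating_cycle {R : Type*} [AddCommGroup R] [LinearOrder R]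
    [IsOrderedAddMonoid R] {y : I → J → R} (hrow : ∀ i, ∑ j, y i j = 0)
    (hcol : ∀ j, ∑ i, y i j = 0) (hy : y ≠ 0) :
    ∃ (P : Type u) (_ : Nonempty P) (r : P → I) (c : P → J) (g : Equiv.Perm P),
      Function.Injective r ∧ Function.Injective c ∧
      (∀ p, y (r p) (c p) < 0) ∧ ∀ p, 0 < y (r (g p)) (c p) := by
  let Row := {i // ∃ j, y i j < 0}
  let Col := {j // ∃ i, y i j < 0}
  have exists_row (j : Col) : ∃ i : Row, 0 < y i j := by
    obtain ⟨j, i, hij⟩ := j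
    obtain ⟨i', -, hi'⟩ := Finset.exists_pos_of_sum_zero_of_exists_nonzero
      (fun i => y i j) (hcol j) ⟨i, Finset.mem_univ i, hij.ne⟩
    exact ⟨⟨i', exists_neg_of_sum_eq_zero (hrow i') hi'.ne'⟩, hi'⟩
  have exists_col (i : Row) : ∃ j : Col, y i j < 0 := by
    obtain ⟨i, j, hij⟩ := i
    exact ⟨⟨j, i, hij⟩, hij⟩
  choose nextRow hnextRow using exists_row
  choose nextCol hnextCol using exists_col
  have : Nonempty Row := by
    obtain ⟨i, hi⟩ := Function.ne_iff.mp hy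
    obtain ⟨j, hij⟩ := Function.ne_iff.mp hi
    exact ⟨⟨i, exists_neg_of_sum_eq_zero (hrow i) hij⟩⟩
  let next : Row → Row := nextRow ∘ nextCol
  let g : Equiv.Perm (Function.periodicPts next) := (Function.bijOn_periodicPts next).equiv
  have hc : Function.Injective fun p : Function.periodicPts next => (nextCol p : J) :=
    fun p q hpq => g.injective (Subtype.ext (congrArg nextRow (Subtype.ext hpq)))
  exact ⟨Function.periodicPts next, (periodicPts_nonempty next).to_subtype,
    fun p => p.1, fun p => nextCol p, g, Subtype.val_injective.comp Subtype.val_injective, hc,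
    fun p => hnextCol p, fun p => hnextRow (nextCol p)⟩

theorem card_add_one_le_of_forall_circulation_eq_zero (k : Type*) [Field k] [Nonempty J]
    (E : Finset (I × J))
    (hE : ∀ y : I → J → k, (∀ i j, y i j ≠ 0 → (i, j) ∈ E) → (∀ i, ∑ j, y i j = 0) →
      (∀ j, ∑ i, y i j = 0) → y = 0) :
    #E + 1 ≤ Fintype.card I + Fintype.card J := by
  obtain ⟨j₀⟩ := ‹Nonempty J›
  let sums : (I × J → k) →ₗ[k] (I → k) × ({j // j ≠ j₀} → k) :=
    (LinearMap.pi fun i => ∑ j, LinearMap.proj (i, j)).prod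
      (LinearMap.pi fun j => ∑ i, LinearMap.proj (i, j.1))
  let F := sums ∘ₗ Function.ExtendByZero.linearMap k ((↑) : E → I × J)
  have hF : Function.Injective F := by
    refine (injective_iff_map_eq_zero F).mpr fun c hc => ?_
    let y : I → J → k := fun i j => Function.extend ((↑) : E → I × J) c 0 (i, j)
    have hrow (i : I) : ∑ j, y i j = 0 := by
      simpa [F, sums, y] using congrFun (congrArg Prod.fst hc) i
    have hcol_ne (j : J) (hj : j ≠ j₀) : ∑ i, y i j = 0 := by
      simpa [F, sums, y] using congrFun (congrArg Prod.snd hc) ⟨j, hj⟩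
    have hcol (j : J) : ∑ i, y i j = 0 := by
      rcases eq_or_ne j j₀ with rfl | hj
      · calc ∑ i, y i j = ∑ j', ∑ i, y i j' :=
              (Fintype.sum_eq_single j hcol_ne).symm
          _ = ∑ i, ∑ j', y i j' := Finset.sum_comm
          _ = 0 := Finset.sum_eq_zero fun i _ => hrow i
      · exact hcol_ne j hj
    have hsupp (i : I) (j : J) (hij : y i j ≠ 0) : (i, j) ∈ E := by
      by_contra hmem
      exact hij (Function.extend_apply' _ _ _ (by simpa using hmem))
    have hy := hE y hsupp hrow hcol
    ext ⟨⟨i, j⟩, hij⟩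
    simpa [y, Subtype.val_injective.extend_apply c 0 ⟨(i, j), hij⟩] using
      congrFun (congrFun hy i) j
  have hrank := LinearMap.finrank_le_finrank_of_injective hF
  have hpos : 0 < Fintype.card J := Fintype.card_pos_iff.mpr ⟨j₀⟩
  simp only [Module.finrank_prod, Module.finrank_fintype_fun_eq_card, Fintype.card_coe,
    Fintype.card_subtype_compl, Fintype.card_subtype_eq] at hrank
  lia

end Circulations

section TropicalAssignment

variable {q : ℕ} {A : Fin q → Fin q → TT} {u v : Fin q → ℝ}

theorem sum_le_of_forall_le_coe_sub (h : ∀ i j, A i j ≤ ((u i - v j : ℝ) : TT))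
    (σ : Equiv.Perm (Fin q)) : ∑ i, A i (σ i) ≤ ((∑ i, u i - ∑ i, v i : ℝ) : TT) := by
  refine (Finset.sum_le_sum fun i _ => h i (σ i)).trans_eq ?_
  rw [← WithBot.coe_sum, Finset.sum_sub_distrib, Equiv.sum_comp σ v]

theorem sum_eq_of_forall_eq_coe_sub {σ : Equiv.Perm (Fin q)}
    (h : ∀ i, A i (σ i) = ((u i - v (σ i) : ℝ) : TT)) :
    ∑ i, A i (σ i) = ((∑ i, u i - ∑ i, v i : ℝ) : TT) := by
  simp only [h]
  rw [← WithBot.coe_sum, Finset.sum_sub_distrib, Equiv.sum_comp σ v]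

theorem tper_eq_of_forall_eq_coe_sub (hle : ∀ i j, A i j ≤ ((u i - v j : ℝ) : TT))
    {σ : Equiv.Perm (Fin q)} (hσ : ∀ i, A i (σ i) = ((u i - v (σ i) : ℝ) : TT)) :
    tper A = ((∑ i, u i - ∑ i, v i : ℝ) : TT) := by
  refine le_antisymm (Finset.sup_le fun π _ => sum_le_of_forall_le_coe_sub hle π) ?_
  rw [← sum_eq_of_forall_eq_coe_sub hσ]
  exact Finset.le_sup (f := fun π : Equiv.Perm (Fin q) => ∑ i, A i (π i)) (Finset.mem_univ σ)

theorem tropSingular_of_two_tight_perms (hle : ∀ i j, A i j ≤ ((u i - v j : ℝ) : TT))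
    {σ π : Equiv.Perm (Fin q)} (hne : σ ≠ π)
    (hσ : ∀ i, A i (σ i) = ((u i - v (σ i) : ℝ) : TT))
    (hπ : ∀ i, A i (π i) = ((u i - v (π i) : ℝ) : TT)) : TropSingular A := by
  have htper := tper_eq_of_forall_eq_coe_sub hle hσ
  exact Or.inr ⟨σ, π, hne, (sum_eq_of_forall_eq_coe_sub hσ).trans htper.symm,
    (sum_eq_of_forall_eq_coe_sub hπ).trans htper.symm⟩

end TropicalAssignment

section Argmax

variable {n : ℕ} {u v w : Fin (n + 1) → TT} {x : Fin (n + 1) → ℝ} {c : ℝ} {j : Fin (n + 1)}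

/-- The set of coordinates attaining the maximum in `w ⊙ x`. Entries equal to `-∞` are excluded,
so that the set is empty, rather than everything, when `w` is identically `-∞`. -/
def tropArgmax (w : Fin (n + 1) → TT) (x : Fin (n + 1) → ℝ) : Finset (Fin (n + 1)) :=
  {j | w j ≠ ⊥ ∧ w j + (x j : TT) = tdot w (toT x)}

theorem add_coe_le_coe_iff {a : TT} {b c : ℝ} :
    a + (b : TT) ≤ (c : TT) ↔ a ≤ ((c - b : ℝ) : TT) := by
  induction a using WithBot.recBotCoe with
  | bot => simp
  | coe a => norm_cast; exact le_sub_iff_add_le.symm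

theorem add_coe_eq_coe_iff {a : TT} {b c : ℝ} :
    a + (b : TT) = (c : TT) ↔ a = ((c - b : ℝ) : TT) := by
  induction a using WithBot.recBotCoe with
  | bot => simp
  | coe a => norm_cast; exact eq_sub_iff_add_eq.symm

theorem tdot_toT_eq_coe_iff : tdot w (toT x) = (c : TT) ↔
    (∀ l, w l ≤ ((c - x l : ℝ) : TT)) ∧ ∃ j, w j = ((c - x j : ℝ) : TT) := by
  simp only [← add_coe_le_coe_iff, ← add_coe_eq_coe_iff]
  constructor
  · intro h
    obtain ⟨j, -, hj⟩ := Finset.exists_mem_eq_sup Finset.univ Finset.univ_nonempty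
      fun j => w j + toT x j
    exact ⟨fun l => h ▸ Finset.le_sup (f := fun j => w j + toT x j) (Finset.mem_univ l),
      j, hj.symm.trans h⟩
  · rintro ⟨hle, j, hj⟩
    refine le_antisymm (Finset.sup_le fun l _ => hle l) (hj ▸ ?_)
    exact Finset.le_sup (f := fun j => w j + toT x j) (Finset.mem_univ j)

theorem tdot_toT_ne_bot_iff : tdot w (toT x) ≠ ⊥ ↔ ∃ j, w j ≠ ⊥ := by
  simp [tdot, toT, Finset.sup_eq_bot_iff]

theorem mem_tropArgmax_iff_of_tdot_eq (h : tdot w (toT x) = (c : TT)) :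
    j ∈ tropArgmax w x ↔ w j = ((c - x j : ℝ) : TT) := by
  simp only [tropArgmax, Finset.mem_filter_univ, h, add_coe_eq_coe_iff, and_iff_right_iff_imp]
  rintro hj
  simp [hj]

theorem mem_tropArgmax_iff_of_tdot_ne_bot (h : tdot w (toT x) ≠ ⊥) :
    j ∈ tropArgmax w x ↔ w j + (x j : TT) = tdot w (toT x) := by
  obtain ⟨c, hc⟩ := WithBot.ne_bot_iff_exists.mp h
  rw [mem_tropArgmax_iff_of_tdot_eq hc.symm, ← hc, add_coe_eq_coe_iff]

theorem exists_tdot_eq_of_mem_tropArgmax (hj : j ∈ tropArgmax w x) :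
    ∃ c : ℝ, tdot w (toT x) = (c : TT) := by
  have hne : tdot w (toT x) ≠ ⊥ :=
    tdot_toT_ne_bot_iff.mpr ⟨j, ((Finset.mem_filter_univ j).mp hj).1⟩
  exact (WithBot.ne_bot_iff_exists.mp hne).imp fun _ => Eq.symm

theorem tropArgmax_nonempty (hw : ∃ j, w j ≠ ⊥) : (tropArgmax w x).Nonempty := by
  obtain ⟨c, hc⟩ := WithBot.ne_bot_iff_exists.mp (tdot_toT_ne_bot_iff (x := x).mpr hw)
  obtain ⟨j, hj⟩ := (tdot_toT_eq_coe_iff.mp hc.symm).2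
  exact ⟨j, (mem_tropArgmax_iff_of_tdot_eq hc.symm).mpr hj⟩

theorem tdot_sup (u v x : Fin n → TT) : tdot (u ⊔ v) x = tdot u x ⊔ tdot v x := by
  simp only [tdot, ← Finset.sup_sup]
  exact Finset.sup_congr rfl fun j _ => max_add_add_right (u j) (v j) (x j) |>.symm

theorem exists_mem_tropArgmax_sup_left (h : tdot v (toT x) ≤ tdot u (toT x))
    (huv : ∃ j, (u ⊔ v) j ≠ ⊥) : ∃ j ∈ tropArgmax (u ⊔ v) x, u j ≠ ⊥ := by
  have hsup : tdot (u ⊔ v) (toT x) = tdot u (toT x) := by rw [tdot_sup, sup_eq_left.mpr h]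
  obtain ⟨c, hc⟩ := WithBot.ne_bot_iff_exists.mp (tdot_toT_ne_bot_iff (x := x).mpr huv)
  obtain ⟨j, hj⟩ := (tdot_toT_eq_coe_iff.mp (hsup.symm.trans hc.symm)).2
  refine ⟨j, (mem_tropArgmax_iff_of_tdot_eq hc.symm).mpr (le_antisymm ?_ ?_), by simp [hj]⟩
  · exact (tdot_toT_eq_coe_iff.mp hc.symm).1 j
  · exact hj ▸ le_sup_left

end Argmax

section GenericMatrix

open scoped Finset

variable {m n : ℕ} {M : Fin m → Fin (n + 1) → TT}

/-- The rows of `M` with at least two maximizing coordinates in `A`, that is, the hyperplane nodes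
having at least two neighbours in `A` in the tangent graph at `x`. -/
def branchingRows (M : Fin m → Fin (n + 1) → TT) (x : Fin (n + 1) → ℝ)
    (A : Finset (Fin (n + 1))) : Finset (Fin m) :=
  {i | 2 ≤ #(tropArgmax (M i) x ∩ A)}

theorem mem_branchingRows {x : Fin (n + 1) → ℝ} {A : Finset (Fin (n + 1))} {i : Fin m} :
    i ∈ branchingRows M x A ↔ 2 ≤ #(tropArgmax (M i) x ∩ A) :=
  Finset.mem_filter_univ i

namespace TropGeneric

theorem perm_eq_one_of_mem_tropArgmax (hgen : TropGeneric M) {x : Fin (n + 1) → ℝ}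
    {P : Type*} [Finite P] {r : P → Fin m} {c : P → Fin (n + 1)} (hr : Function.Injective r)
    (hc : Function.Injective c) {g : Equiv.Perm P}
    (hid : ∀ p, c p ∈ tropArgmax (M (r p)) x)
    (hg : ∀ p, c p ∈ tropArgmax (M (r (g p))) x) : g = 1 := by
  obtain ⟨q, ⟨e⟩⟩ := Finite.exists_equiv_fin P
  choose u hu using fun p => exists_tdot_eq_of_mem_tropArgmax (hid p)
  let A : Fin q → Fin q → TT := fun i j => M (r (e.symm i)) (c (e.symm j))
  have hle (i j : Fin q) : A i j ≤ ((u (e.symm i) - x (c (e.symm j)) : ℝ) : TT) :=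
    (tdot_toT_eq_coe_iff.mp (hu (e.symm i))).1 _
  have tight_one (i : Fin q) :
      A i ((1 : Equiv.Perm (Fin q)) i) = ((u (e.symm i) - x (c (e.symm i)) : ℝ) : TT) :=
    (mem_tropArgmax_iff_of_tdot_eq (hu _)).mp (hid _)
  let π : Equiv.Perm (Fin q) := e.permCongr g⁻¹
  have tight_π (i : Fin q) : A i (π i) = ((u (e.symm i) - x (c (e.symm (π i))) : ℝ) : TT) := by
    refine (mem_tropArgmax_iff_of_tdot_eq (hu _)).mp ?_
    simpa [π, Equiv.permCongr_apply] using hg (g⁻¹ (e.symm i))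
  have htper : tper A ≠ ⊥ := by
    rw [tper_eq_of_forall_eq_coe_sub (v := fun j => x (c (e.symm j))) hle tight_one]
    exact WithBot.coe_ne_bot
  have hns : ¬ TropSingular A := (hgen q _ _ (hr.comp e.symm.injective)
    (hc.comp e.symm.injective)).resolve_left htper
  have hπ : π = 1 := by
    by_contra hne
    exact hns (tropSingular_of_two_tight_perms (v := fun j => x (c (e.symm j))) hle
      (Ne.symm hne) tight_one tight_π)
  ext p
  simpa [π, Equiv.permCongr_apply] using (congrArg (fun σ => σ (e (g p))) hπ).symm

theorem circulation_eq_zero (hgen : TropGeneric M) {x : Fin (n + 1) → ℝ} {S : Finset (Fin m)}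
    {A : Finset (Fin (n + 1))} {y : S → A → ℝ}
    (hsupp : ∀ i j, y i j ≠ 0 → (j : Fin (n + 1)) ∈ tropArgmax (M i) x)
    (hrow : ∀ i, ∑ j, y i j = 0) (hcol : ∀ j, ∑ i, y i j = 0) : y = 0 := by
  by_contra hy
  obtain ⟨P, ⟨p⟩, r, c, g, hr, hc, hneg, hpos⟩ := exists_alternating_cycle hrow hcol hy
  have : Finite P := Finite.of_injective r hr
  have hg : g = 1 := hgen.perm_eq_one_of_mem_tropArgmax
    (Subtype.val_injective.comp hr) (Subtype.val_injective.comp hc)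
    (fun p => hsupp _ _ (hneg p).ne) (fun p => hsupp _ _ (hpos p).ne')
  exact (hneg p).asymm (by simpa [hg] using hpos p)

/- A forest on `S ⊔ A` has at most `#S + #A - 1` edges, and the tangent graph is a forest. -/
theorem sum_card_tropArgmax_inter_add_one_le (hgen : TropGeneric M) (x : Fin (n + 1) → ℝ)
    (S : Finset (Fin m)) {A : Finset (Fin (n + 1))} (hA : A.Nonempty) :
    ∑ i ∈ S, #(tropArgmax (M i) x ∩ A) + 1 ≤ #S + #A := by
  have : Nonempty A := hA.to_subtype
  let E : Finset (S × A) := {e | (e.2 : Fin (n + 1)) ∈ tropArgmax (M e.1) x}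
  have hcard : #E = ∑ i ∈ S, #(tropArgmax (M i) x ∩ A) := by
    simp only [E, Finset.card_filter, Fintype.sum_prod_type, Finset.inter_comm _ A,
      ← Finset.filter_mem_eq_inter]
    rw [← Finset.sum_coe_sort S]
    exact Finset.sum_congr rfl fun i _ =>
      Finset.sum_coe_sort A fun j => if j ∈ tropArgmax (M i) x then 1 else 0
  rw [← hcard]
  simpa using card_add_one_le_of_forall_circulation_eq_zero ℝ E fun y hsupp hrow hcol =>
    hgen.circulation_eq_zero (fun i j hij => by simpa [E] using hsupp i j hij) hrow hcol

theorem card_branchingRows_add_one_le (hgen : TropGeneric M) (x : Fin (n + 1) → ℝ)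
    {A : Finset (Fin (n + 1))} (hA : A.Nonempty) : #(branchingRows M x A) + 1 ≤ #A := by
  have hforest := hgen.sum_card_tropArgmax_inter_add_one_le x (branchingRows M x A) hA
  have hsum := Finset.card_nsmul_le_sum (branchingRows M x A)
    (fun i => #(tropArgmax (M i) x ∩ A)) 2 fun i hi => mem_branchingRows.mp hi
  rw [smul_eq_mul] at hsum
  lia

theorem branchingRows_univ_eq (hgen : TropGeneric M) {x : Fin (n + 1) → ℝ} {S : Finset (Fin m)}
    (hcard : n ≤ #S) (hS : S ⊆ branchingRows M x Finset.univ) :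
    branchingRows M x Finset.univ = S := by
  have hle := hgen.card_branchingRows_add_one_le x Finset.univ_nonempty
  rw [Finset.card_fin] at hle
  exact (Finset.eq_of_subset_of_card_le hS (by lia)).symm

theorem card_tropArgmax_eq_two (hgen : TropGeneric M) {x : Fin (n + 1) → ℝ}
    {S : Finset (Fin m)} (hcard : n ≤ #S) (hS : ∀ i ∈ S, 2 ≤ #(tropArgmax (M i) x)) {i : Fin m}
    (hi : i ∈ S) : #(tropArgmax (M i) x) = 2 := by
  have hforest := hgen.sum_card_tropArgmax_inter_add_one_le x S Finset.univ_nonempty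
  simp only [Finset.inter_univ, Finset.card_fin] at hforest
  refine ((Finset.sum_eq_sum_iff_of_le hS).mp (le_antisymm (Finset.sum_le_sum hS) ?_) i hi).symm
  rw [Finset.sum_const, smul_eq_mul]
  lia

theorem branchingRows_union_compl_eq (hgen : TropGeneric M) {x : Fin (n + 1) → ℝ}
    {J : Finset (Fin (n + 1))} (hJ : J.Nonempty) (hJc : Jᶜ.Nonempty) {K : Finset (Fin m)}
    (hcard : n ≤ #K + 1) (hK : K ⊆ branchingRows M x J ∪ branchingRows M x Jᶜ) :
    branchingRows M x J ∪ branchingRows M x Jᶜ = K ∧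
      Disjoint (branchingRows M x J) (branchingRows M x Jᶜ) := by
  have hle := hgen.card_branchingRows_add_one_le x hJ
  have hle_compl := hgen.card_branchingRows_add_one_le x hJc
  have hsides : #J + #Jᶜ = n + 1 := by rw [Finset.card_add_card_compl, Fintype.card_fin]
  have hunion := Finset.card_union_add_card_inter (branchingRows M x J) (branchingRows M x Jᶜ)
  have hK_le := Finset.card_le_card hK
  refine ⟨(Finset.eq_of_subset_of_card_le hK (by lia)).symm, ?_⟩
  rw [Finset.disjoint_iff_inter_eq_empty, ← Finset.card_eq_zero]
  lia

end TropGeneric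

end GenericMatrix

section ArgmaxAlongSegment

variable {n : ℕ} {w : Fin (n + 1) → TT} {ξ : Fin (n + 1) → ℝ} {J : Finset (Fin (n + 1))} {a b : ℝ}

theorem tropArgmax_eq_inter_of_le_add {x y : Fin (n + 1) → ℝ} {δ : ℝ} {A : Finset (Fin (n + 1))}
    (hle : ∀ l, y l ≤ x l + δ) (heq : ∀ l, y l = x l + δ ↔ l ∈ A)
    (hA : (tropArgmax w x ∩ A).Nonempty) : tropArgmax w y = tropArgmax w x ∩ A := by
  obtain ⟨j₀, hj₀⟩ := hA
  obtain ⟨hj₀, hj₀A⟩ := Finset.mem_inter.mp hj₀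
  obtain ⟨c, hc⟩ := exists_tdot_eq_of_mem_tropArgmax hj₀
  have hw := (tdot_toT_eq_coe_iff.mp hc).1
  rw [mem_tropArgmax_iff_of_tdot_eq hc] at hj₀
  have hval : tdot w (toT y) = ((c + δ : ℝ) : TT) := by
    refine tdot_toT_eq_coe_iff.mpr ⟨fun l => (hw l).trans (WithBot.coe_le_coe.mpr ?_), j₀, ?_⟩
    · linarith [hle l]
    · rw [hj₀, (heq j₀).mpr hj₀A, add_sub_add_right_eq_sub]
  ext j
  rw [Finset.mem_inter, mem_tropArgmax_iff_of_tdot_eq hval, mem_tropArgmax_iff_of_tdot_eq hc]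
  by_cases hj : j ∈ A
  · rw [(heq j).mpr hj, add_sub_add_right_eq_sub, and_iff_left hj]
  · have hlt : y j < x j + δ := (hle j).lt_of_ne fun h => hj ((heq j).mp h)
    have hwlt := (hw j).trans_lt (WithBot.coe_lt_coe.mpr (by linarith : c - x j < c + δ - y j))
    exact iff_of_false hwlt.ne fun h => hj h.2

theorem add_smul_eJ_apply_of_mem {j : Fin (n + 1)} (hj : j ∈ J) (t : ℝ) :
    (ξ + t • eJ J) j = ξ j + t := by
  simp [eJ, hj]

theorem add_smul_eJ_apply_of_notMem {j : Fin (n + 1)} (hj : j ∉ J) (t : ℝ) :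
    (ξ + t • eJ J) j = ξ j := by
  simp [eJ, hj]

theorem tropArgmax_add_smul_eJ_eq_inter (hab : a < b)
    (hJ : (tropArgmax w (ξ + a • eJ J) ∩ J).Nonempty) :
    tropArgmax w (ξ + b • eJ J) = tropArgmax w (ξ + a • eJ J) ∩ J := by
  refine tropArgmax_eq_inter_of_le_add (δ := b - a) (fun l => ?_) (fun l => ?_) hJ <;>
    by_cases hl : l ∈ J <;> simp [eJ, hl, hab.le, (sub_pos.mpr hab).ne']

theorem tropArgmax_add_smul_eJ_eq_inter_compl (hab : a < b)
    (hJ : (tropArgmax w (ξ + b • eJ J) ∩ Jᶜ).Nonempty) :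
    tropArgmax w (ξ + a • eJ J) = tropArgmax w (ξ + b • eJ J) ∩ Jᶜ := by
  refine tropArgmax_eq_inter_of_le_add (δ := 0) (fun l => ?_) (fun l => ?_) hJ <;>
    by_cases hl : l ∈ J <;> simp [eJ, hl, hab.le, hab.ne]

/- The maximum over `Jᶜ` is constant along the segment and the maximum over `J` has slope one;
`t` is the parameter at which they agree. -/
theorem exists_mem_Icc_tropArgmax_meets_both
    (ha : (tropArgmax w (ξ + a • eJ J) ∩ Jᶜ).Nonempty)
    (hb : (tropArgmax w (ξ + b • eJ J) ∩ J).Nonempty) :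
    ∃ t ∈ Set.Icc a b, (tropArgmax w (ξ + t • eJ J) ∩ J).Nonempty ∧
      (tropArgmax w (ξ + t • eJ J) ∩ Jᶜ).Nonempty := by
  obtain ⟨j, hj⟩ := ha
  obtain ⟨k, hk⟩ := hb
  obtain ⟨hj, hjJc⟩ := Finset.mem_inter.mp hj
  obtain ⟨hk, hkJ⟩ := Finset.mem_inter.mp hk
  have hjJ : j ∉ J := Finset.mem_compl.mp hjJc
  obtain ⟨ca, hca⟩ := exists_tdot_eq_of_mem_tropArgmax hj
  obtain ⟨cb, hcb⟩ := exists_tdot_eq_of_mem_tropArgmax hk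
  rw [mem_tropArgmax_iff_of_tdot_eq hca, add_smul_eJ_apply_of_notMem hjJ] at hj
  rw [mem_tropArgmax_iff_of_tdot_eq hcb, add_smul_eJ_apply_of_mem hkJ] at hk
  have hle_a := (tdot_toT_eq_coe_iff.mp hca).1
  have hle_b := (tdot_toT_eq_coe_iff.mp hcb).1
  let t : ℝ := ca - cb + b
  have coord_t {l : Fin (n + 1)} (hl : l ∈ J) :
      ca - (ξ + t • eJ J) l = cb - (ξ + b • eJ J) l := by
    rw [add_smul_eJ_apply_of_mem hl, add_smul_eJ_apply_of_mem hl]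
    ring
  have hval : tdot w (toT (ξ + t • eJ J)) = (ca : TT) := by
    refine tdot_toT_eq_coe_iff.mpr ⟨fun l => ?_, j, by rw [add_smul_eJ_apply_of_notMem hjJ, hj]⟩
    by_cases hl : l ∈ J
    · exact coord_t hl ▸ hle_b l
    · simpa only [add_smul_eJ_apply_of_notMem hl] using hle_a l
  have hat : ca - (ξ k + a) ≥ cb - (ξ k + b) := by
    simpa only [hk, add_smul_eJ_apply_of_mem hkJ, WithBot.coe_le_coe] using hle_a k
  have htb : ca - ξ j ≤ cb - ξ j := by
    simpa only [hj, add_smul_eJ_apply_of_notMem hjJ, WithBot.coe_le_coe] using hle_b j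
  refine ⟨t, ⟨by linarith, by linarith⟩, ⟨k, Finset.mem_inter.mpr ⟨?_, hkJ⟩⟩,
    ⟨j, Finset.mem_inter.mpr ⟨?_, hjJc⟩⟩⟩
  · rw [mem_tropArgmax_iff_of_tdot_eq hval, coord_t hkJ, hk, add_smul_eJ_apply_of_mem hkJ]
  · rw [mem_tropArgmax_iff_of_tdot_eq hval, hj, add_smul_eJ_apply_of_notMem hjJ]

theorem tropArgmax_add_smul_eJ_eq_of_not_meets_both (hw : ∃ j, w j ≠ ⊥) (hab : a < b)
    (hside : ∀ t ∈ Set.Icc a b, ¬ ((tropArgmax w (ξ + t • eJ J) ∩ J).Nonempty ∧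
      (tropArgmax w (ξ + t • eJ J) ∩ Jᶜ).Nonempty)) :
    tropArgmax w (ξ + b • eJ J) = tropArgmax w (ξ + a • eJ J) := by
  have meets (t : ℝ) : (tropArgmax w (ξ + t • eJ J) ∩ J).Nonempty ∨
      (tropArgmax w (ξ + t • eJ J) ∩ Jᶜ).Nonempty := by
    obtain ⟨j, hj⟩ := tropArgmax_nonempty (x := ξ + t • eJ J) hw
    by_cases hjJ : j ∈ J
    · exact Or.inl ⟨j, by simp [hj, hjJ]⟩
    · exact Or.inr ⟨j, by simp [hj, hjJ]⟩
  by_cases ha : (tropArgmax w (ξ + a • eJ J) ∩ J).Nonempty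
  · rw [tropArgmax_add_smul_eJ_eq_inter hab ha, Finset.inter_eq_left]
    intro j hj
    by_contra hjJ
    exact hside a (Set.left_mem_Icc.mpr hab.le) ⟨ha, j, by simp [hj, hjJ]⟩
  by_cases hb : (tropArgmax w (ξ + b • eJ J) ∩ Jᶜ).Nonempty
  · rw [tropArgmax_add_smul_eJ_eq_inter_compl hab hb, eq_comm, Finset.inter_eq_left]
    intro j hj
    by_contra hjJ
    exact hside b (Set.right_mem_Icc.mpr hab.le) ⟨⟨j, by simpa [hj] using hjJ⟩, hb⟩
  obtain ⟨t, ht, hboth⟩ := exists_mem_Icc_tropArgmax_meets_both ((meets a).resolve_left ha)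
    ((meets b).resolve_right hb)
  exact absurd hboth (hside t ht)

end ArgmaxAlongSegment

section TangentDigraphAlongSegment

open scoped Finset

variable {m n : ℕ} {Wp Wn : Fin m → Fin (n + 1) → TT} {x ξ : Fin (n + 1) → ℝ} {i : Fin m}
  {J : Finset (Fin (n + 1))} {K : Finset (Fin m)} {ℓ : Fin m} {a b t : ℝ}

theorem isHypNode_iff_mem_hypHS (hrow : ∃ j, max (Wp i j) (Wn i j) ≠ ⊥) :
    isHypNode Wp Wn x i ↔ toT x ∈ hypHS Wp Wn i := by
  refine and_iff_left_of_imp fun h => bot_lt_iff_ne_bot.mpr ?_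
  have hmod : tdot (Wp i ⊔ Wn i) (toT x) ≠ ⊥ := tdot_toT_ne_bot_iff.mpr hrow
  rwa [tdot_sup, ← h, sup_idem] at hmod

theorem isTEdge_iff_mem_tropArgmax (hrow : ∃ j, max (Wp i j) (Wn i j) ≠ ⊥) {j : Fin (n + 1)} :
    isTEdge Wp Wn x i j ↔ isHypNode Wp Wn x i ∧ j ∈ tropArgmax (tmod Wp Wn i) x := by
  have hmod : tdot (tmod Wp Wn i) (toT x) ≠ ⊥ := tdot_toT_ne_bot_iff.mpr hrow
  rw [mem_tropArgmax_iff_of_tdot_ne_bot hmod, isTEdge]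

theorem exists_pos_mem_tropArgmax (hrow : ∃ j, max (Wp i j) (Wn i j) ≠ ⊥)
    (hx : toT x ∈ halfHS Wp Wn i) : ∃ j ∈ tropArgmax (tmod Wp Wn i) x, Wp i j ≠ ⊥ :=
  exists_mem_tropArgmax_sup_left hx hrow

theorem exists_neg_mem_tropArgmax (hrow : ∃ j, max (Wp i j) (Wn i j) ≠ ⊥)
    (hx : toT x ∈ hypHS Wp Wn i) : ∃ j ∈ tropArgmax (tmod Wp Wn i) x, Wn i j ≠ ⊥ := by
  rw [show tmod Wp Wn i = Wn i ⊔ Wp i from sup_comm (Wp i) (Wn i)]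
  refine exists_mem_tropArgmax_sup_left (le_of_eq hx) ?_
  rwa [sup_comm]

theorem two_le_card_of_pos_of_neg (hsign : ∀ j, min (Wp i j) (Wn i j) = ⊥)
    {A : Finset (Fin (n + 1))} (hpos : ∃ j ∈ A, Wp i j ≠ ⊥) (hneg : ∃ j ∈ A, Wn i j ≠ ⊥) :
    2 ≤ #A := by
  obtain ⟨j, hj, hWp⟩ := hpos
  obtain ⟨k, hk, hWn⟩ := hneg
  refine Finset.one_lt_card.mpr ⟨j, hj, k, hk, ?_⟩
  rintro rfl
  exact (min_eq_bot.mp (hsign j)).elim hWp hWn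

theorem two_le_card_tropArgmax_of_mem_hypHS (hsign : ∀ j, min (Wp i j) (Wn i j) = ⊥)
    (hrow : ∃ j, max (Wp i j) (Wn i j) ≠ ⊥) (hx : toT x ∈ hypHS Wp Wn i) :
    2 ≤ #(tropArgmax (tmod Wp Wn i) x) :=
  two_le_card_of_pos_of_neg hsign (exists_pos_mem_tropArgmax hrow (le_of_eq (Eq.symm hx)))
    (exists_neg_mem_tropArgmax hrow hx)

/- Moving away from `ξ + t • eJ J` towards `b` (resp. `a`) only keeps the maximizers in `J`
(resp. `Jᶜ`), and in the half-space one of the remaining ones is positive. -/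
theorem mem_branchingRows_union_compl_of_mem_hypHS (hsign : ∀ j, min (Wp i j) (Wn i j) = ⊥)
    (hrow : ∃ j, max (Wp i j) (Wn i j) ≠ ⊥) (hat : a < t) (htb : t < b)
    (ha : toT (ξ + a • eJ J) ∈ halfHS Wp Wn i) (hb : toT (ξ + b • eJ J) ∈ halfHS Wp Wn i)
    (ht : toT (ξ + t • eJ J) ∈ hypHS Wp Wn i) :
    i ∈ branchingRows (tmod Wp Wn) (ξ + t • eJ J) J ∪
      branchingRows (tmod Wp Wn) (ξ + t • eJ J) Jᶜ := by
  obtain ⟨j, hj, hWn⟩ := exists_neg_mem_tropArgmax hrow ht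
  rw [Finset.mem_union, mem_branchingRows, mem_branchingRows]
  by_cases hjJ : j ∈ J
  · left
    have hmem := Finset.mem_inter.mpr ⟨hj, hjJ⟩
    refine two_le_card_of_pos_of_neg hsign ?_ ⟨j, hmem, hWn⟩
    exact tropArgmax_add_smul_eJ_eq_inter htb ⟨j, hmem⟩ ▸ exists_pos_mem_tropArgmax hrow hb
  · right
    have hmem := Finset.mem_inter.mpr ⟨hj, Finset.mem_compl.mpr hjJ⟩
    refine two_le_card_of_pos_of_neg hsign ?_ ⟨j, hmem, hWn⟩
    exact tropArgmax_add_smul_eJ_eq_inter_compl hat ⟨j, hmem⟩ ▸ exists_pos_mem_tropArgmax hrow ha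

variable (hsign : ∀ i j, min (Wp i j) (Wn i j) = ⊥)
  (hrow : ∀ i, ∃ j, max (Wp i j) (Wn i j) ≠ ⊥) (hgen : TropGeneric (tmod Wp Wn))

section Interior

variable (hK : n ≤ #K + 1) (hJ : J.Nonempty) (hJc : Jᶜ.Nonempty) (hat : a < t) (htb : t < b)
  (ha : toT (ξ + a • eJ J) ∈ edgeEK Wp Wn K) (hb : toT (ξ + b • eJ J) ∈ edgeEK Wp Wn K)
  (ht : toT (ξ + t • eJ J) ∈ edgeEK Wp Wn K)

include hsign hrow hgen hK hJ hJc hat htb ha hb ht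

theorem branchingRows_union_compl_eq_of_edgeEK :
    branchingRows (tmod Wp Wn) (ξ + t • eJ J) J ∪ branchingRows (tmod Wp Wn) (ξ + t • eJ J) Jᶜ = K ∧
      Disjoint (branchingRows (tmod Wp Wn) (ξ + t • eJ J) J)
        (branchingRows (tmod Wp Wn) (ξ + t • eJ J) Jᶜ) :=
  hgen.branchingRows_union_compl_eq hJ hJc hK fun i hi =>
    mem_branchingRows_union_compl_of_mem_hypHS (hsign i) (hrow i) hat htb (ha.2 i) (hb.2 i)
      (ht.1 i hi)

theorem isHypNode_iff_mem_of_interior : isHypNode Wp Wn (ξ + t • eJ J) i ↔ i ∈ K := by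
  rw [isHypNode_iff_mem_hypHS (hrow i)]
  refine ⟨fun hi => ?_, ht.1 i⟩
  rw [← (branchingRows_union_compl_eq_of_edgeEK hsign hrow hgen hK hJ hJc hat htb ha hb ht).1]
  exact mem_branchingRows_union_compl_of_mem_hypHS (hsign i) (hrow i) hat htb (ha.2 i) (hb.2 i) hi

theorem not_tropArgmax_meets_both_of_interior (hi : i ∈ K) :
    ¬ ((tropArgmax (tmod Wp Wn i) (ξ + t • eJ J) ∩ J).Nonempty ∧
      (tropArgmax (tmod Wp Wn i) (ξ + t • eJ J) ∩ Jᶜ).Nonempty) := by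
  rintro ⟨hmeets, hmeets_compl⟩
  have hdisj :=
    (branchingRows_union_compl_eq_of_edgeEK hsign hrow hgen hK hJ hJc hat htb ha hb ht).2
  have hmem : i ∈ branchingRows (tmod Wp Wn) (ξ + t • eJ J) J := by
    rw [mem_branchingRows, ← tropArgmax_add_smul_eJ_eq_inter htb hmeets]
    exact two_le_card_tropArgmax_of_mem_hypHS (hsign i) (hrow i) (hb.1 i hi)
  have hmem_compl : i ∈ branchingRows (tmod Wp Wn) (ξ + t • eJ J) Jᶜ := by
    rw [mem_branchingRows, ← tropArgmax_add_smul_eJ_eq_inter_compl hat hmeets_compl]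
    exact two_le_card_tropArgmax_of_mem_hypHS (hsign i) (hrow i) (ha.1 i hi)
  exact Finset.disjoint_left.mp hdisj hmem hmem_compl

end Interior

section BasicPoint

variable {I : Finset (Fin m)} (hI : n ≤ #I) (hx : ∀ i ∈ I, toT x ∈ hypHS Wp Wn i)

include hsign hrow hgen hI hx

theorem isHypNode_iff_mem_of_basic : isHypNode Wp Wn x i ↔ i ∈ I := by
  rw [isHypNode_iff_mem_hypHS (hrow i)]
  have hbranching {k : Fin m} (hk : toT x ∈ hypHS Wp Wn k) :
      k ∈ branchingRows (tmod Wp Wn) x Finset.univ := by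
    rw [mem_branchingRows, Finset.inter_univ]
    exact two_le_card_tropArgmax_of_mem_hypHS (hsign k) (hrow k) hk
  have heq := hgen.branchingRows_univ_eq hI fun k hk => hbranching (hx k hk)
  exact ⟨fun hi => heq ▸ hbranching hi, hx i⟩

theorem not_tropArgmax_meets_both_of_basic (hi : i ∈ I) (hb : 0 < b)
    (hxb : toT (x + b • eJ J) ∈ hypHS Wp Wn i) :
    ¬ ((tropArgmax (tmod Wp Wn i) x ∩ J).Nonempty ∧
      (tropArgmax (tmod Wp Wn i) x ∩ Jᶜ).Nonempty) := by
  rintro ⟨hmeets, hmeets_compl⟩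
  have htwo : 2 ≤ #(tropArgmax (tmod Wp Wn i) x ∩ J) := by
    have hshrink := tropArgmax_add_smul_eJ_eq_inter (ξ := x) (a := 0) hb (by simpa using hmeets)
    rw [zero_smul, add_zero] at hshrink
    exact hshrink ▸ two_le_card_tropArgmax_of_mem_hypHS (hsign i) (hrow i) hxb
  have hcard : #(tropArgmax (tmod Wp Wn i) x) = 2 := hgen.card_tropArgmax_eq_two hI
    (fun k hk => two_le_card_tropArgmax_of_mem_hypHS (hsign k) (hrow k) (hx k hk)) hi
  have hsplit := Finset.card_inter_add_card_sdiff (tropArgmax (tmod Wp Wn i) x) J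
  rw [Finset.sdiff_eq_inter_compl, hcard] at hsplit
  have := hmeets_compl.card_pos
  lia

end BasicPoint

section Segment

variable {μ : ℝ} (hK : #K + 1 = n) (hJ : J.Nonempty) (hJc : Jᶜ.Nonempty)
  (hseg : ∀ t, 0 ≤ t → t ≤ μ → toT (ξ + t • eJ J) ∈ edgeEK Wp Wn K) (ht : 0 < t) (htμ : t < μ)

include hsign hrow hgen hK hJ hJc hseg ht htμ

theorem isHypNode_add_smul_eJ_iff_mem : isHypNode Wp Wn (ξ + t • eJ J) i ↔ i ∈ K := by
  have hμ := ht.trans htμ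
  exact isHypNode_iff_mem_of_interior hsign hrow hgen hK.ge hJ hJc ht htμ
    (hseg 0 le_rfl hμ.le) (hseg μ hμ.le le_rfl) (hseg t ht.le htμ.le)

variable (hℓ : ℓ ∉ K) (hbasic : toT ξ ∈ edgeEK Wp Wn (insert ℓ K))

include hℓ hbasic

theorem tropArgmax_add_smul_eJ_eq_of_mem (hi : i ∈ K) :
    tropArgmax (tmod Wp Wn i) (ξ + t • eJ J) = tropArgmax (tmod Wp Wn i) ξ := by
  have hμ := ht.trans htμ
  have hstart := hseg 0 le_rfl hμ.le
  have hend := hseg μ hμ.le le_rfl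
  have hI : n ≤ #(insert ℓ K) := by rw [Finset.card_insert_of_notMem hℓ, hK]
  suffices tropArgmax (tmod Wp Wn i) (ξ + t • eJ J) =
      tropArgmax (tmod Wp Wn i) (ξ + (0 : ℝ) • eJ J) by simpa using this
  refine tropArgmax_add_smul_eJ_eq_of_not_meets_both (hrow i) ht fun s ⟨hs, hst⟩ => ?_
  rcases hs.eq_or_lt with rfl | hs
  · rw [zero_smul, add_zero]
    exact not_tropArgmax_meets_both_of_basic hsign hrow hgen hI hbasic.1
      (Finset.mem_insert_of_mem hi) hμ (hend.1 i hi)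
  · have hsμ := hst.trans_lt htμ
    exact not_tropArgmax_meets_both_of_interior hsign hrow hgen hK.ge hJ hJc hs hsμ hstart hend
      (hseg s hs.le hsμ.le) hi

theorem isHypNode_add_smul_eJ_iff :
    isHypNode Wp Wn (ξ + t • eJ J) i ↔ isHypNode Wp Wn ξ i ∧ i ≠ ℓ := by
  have hI : n ≤ #(insert ℓ K) := by rw [Finset.card_insert_of_notMem hℓ, hK]
  rw [isHypNode_add_smul_eJ_iff_mem hsign hrow hgen hK hJ hJc hseg ht htμ,
    isHypNode_iff_mem_of_basic hsign hrow hgen hI hbasic.1, Finset.mem_insert]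
  exact ⟨fun hi => ⟨Or.inr hi, ne_of_mem_of_not_mem hi hℓ⟩, fun ⟨hi, hne⟩ => hi.resolve_left hne⟩

theorem isTEdge_add_smul_eJ_iff {j : Fin (n + 1)} :
    isTEdge Wp Wn (ξ + t • eJ J) i j ↔ isTEdge Wp Wn ξ i j ∧ i ≠ ℓ := by
  rw [isTEdge_iff_mem_tropArgmax (hrow i), isTEdge_iff_mem_tropArgmax (hrow i), and_right_comm,
    ← isHypNode_add_smul_eJ_iff hsign hrow hgen hK hJ hJc hseg ht htμ hℓ hbasic]
  refine and_congr_right fun hnode => ?_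
  have hi := (isHypNode_add_smul_eJ_iff_mem hsign hrow hgen hK hJ hJc hseg ht htμ).mp hnode
  rw [tropArgmax_add_smul_eJ_eq_of_mem hsign hrow hgen hK hJ hJc hseg ht htμ hℓ hbasic hi]

theorem arcRel_add_smul_eJ_iff {u v : TGV m n} :
    arcRel Wp Wn (ξ + t • eJ J) u v ↔
      arcRel Wp Wn ξ u v ∧ u ≠ Sum.inl ℓ ∧ v ≠ Sum.inl ℓ := by
  have hedge (i : Fin m) (j : Fin (n + 1)) :=
    isTEdge_add_smul_eJ_iff hsign hrow hgen hK hJ hJc hseg ht htμ hℓ hbasic (i := i) (j := j)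
  rcases u with i | j <;> rcases v with i' | j' <;> simp [arcRel, hedge, and_right_comm]

end Segment

end TangentDigraphAlongSegment

theorem stmt15_general {m n : ℕ} (Wp Wn : Fin m → Fin (n + 1) → TT)
    (hsign : ∀ i j, min (Wp i j) (Wn i j) = ⊥)
    (hrow : ∀ i, ∃ j, max (Wp i j) (Wn i j) ≠ ⊥)
    (hgen : TropGeneric (tmod Wp Wn))
    (K : Finset (Fin m)) (hK : K.card + 1 = n)
    (ξ : Fin (n + 1) → ℝ) (J : Finset (Fin (n + 1))) (hJ : J.Nonempty) (hJc : Jᶜ.Nonempty) (μ : ℝ)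
    (hseg : ∀ lam : ℝ, 0 ≤ lam → lam ≤ μ → toT (ξ + lam • eJ J) ∈ edgeEK Wp Wn K)
    (ℓ : Fin m) (hℓ : ℓ ∉ K) (hbasic : toT ξ ∈ edgeEK Wp Wn (insert ℓ K)) :
    ∀ lam : ℝ, 0 < lam → lam < μ →
      (∀ i, isHypNode Wp Wn (ξ + lam • eJ J) i ↔
        (isHypNode Wp Wn ξ i ∧ i ≠ ℓ)) ∧
      (∀ u v, arcRel Wp Wn (ξ + lam • eJ J) u v ↔
        (arcRel Wp Wn ξ u v ∧ u ≠ Sum.inl ℓ ∧ v ≠ Sum.inl ℓ)) :=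
  fun _ hlam hlamμ =>
    ⟨fun _ => isHypNode_add_smul_eJ_iff hsign hrow hgen hK hJ hJc hseg hlam hlamμ hℓ hbasic,
      fun _ _ => arcRel_add_smul_eJ_iff hsign hrow hgen hK hJ hJc hseg hlam hlamμ hℓ hbasic⟩

/-- If the initial endpoint `ξ` of an ordinary segment of
`E_K` is the tropical basic point `x^{K∪{ℓ}}`, then the common tangent digraph
on the open segment is obtained from `D_ξ` by deleting the hyperplane node `ℓ`
and its incident arcs. -/
theorem stmt15 {m n : ℕ} (Wp Wn : Fin m → Fin (n + 1) → TT)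
    (hsign : ∀ i j, min (Wp i j) (Wn i j) = ⊥)
    (hrow : ∀ i, ∃ j, max (Wp i j) (Wn i j) ≠ ⊥)
    (hgen : TropGeneric (tmod Wp Wn))
    (hfin : ∀ x ∈ coneC Wp Wn, x ≠ (fun _ => (⊥ : TT)) → ∀ j, x j ≠ ⊥)
    (K : Finset (Fin m)) (hK : K.card + 1 = n)
    (hU : ∃ (er : Fin K.card → Fin m) (ec : Fin K.card → Fin (n + 1)),
      Function.Injective er ∧ (∀ a, er a ∈ K) ∧ Function.Injective ec ∧
      (∀ a, ec a ≠ Fin.last n) ∧ ⊥ < tper (fun a b => tmod Wp Wn (er a) (ec b)))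
    (hEK : ∃ y : Fin (n + 1) → ℝ, toT y ∈ edgeEK Wp Wn K)
    (ξ : Fin (n + 1) → ℝ) (J : Finset (Fin (n + 1))) (μ : ℝ)
    (hseg : IsOrdSeg Wp Wn K ξ J μ)
    (ℓ : Fin m) (hℓ : ℓ ∉ K) (hbasic : toT ξ ∈ edgeEK Wp Wn (insert ℓ K)) :
    ∀ lam : ℝ, 0 < lam → lam < μ →
      (∀ i, isHypNode Wp Wn (ξ + lam • eJ J) i ↔
        (isHypNode Wp Wn ξ i ∧ i ≠ ℓ)) ∧
      (∀ u v, arcRel Wp Wn (ξ + lam • eJ J) u v ↔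
        (arcRel Wp Wn ξ u v ∧ u ≠ Sum.inl ℓ ∧ v ≠ Sum.inl ℓ)) := by
  obtain ⟨-, hJ, hJu, hmem, -⟩ := hseg
  exact stmt15_general Wp Wn hsign hrow hgen K hK ξ J (Finset.nonempty_iff_ne_empty.mpr hJ)
    (Finset.nonempty_iff_ne_empty.mpr (mt (Finset.compl_eq_empty_iff J).mp hJu)) μ hmem ℓ hℓ hbasic
end
end
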